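/- Theorem A: Assume (H1), (H2) and (H3). Then the set 𝔠_P = {x ∈ X : ω(x) is a linearly stable cycle} is prevalent in X, i.e., X ∖ 𝔠_P is shy. -/

import Mathlib

open Set Topology Filter MeasureTheory Function

universe u

variable {E : Type u} [NormedAddCommGroup E] [NormedSpace ℝ E]
  [MeasurableSpace E] [BorelSpace E]

/-- `x ≤ y` in the order induced by the cone `K`. -/
def coneLE (K : Set E) (x y : E) : Prop := y - x ∈ K

/-- `x < y` in the order induced by the cone `K`. -/
def coneLT (K : Set E) (x y : E) : Prop := coneLE K x y ∧ x ≠ y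

/-- `x ≪ y` (strong ordering) induced by the cone `K`. -/
def coneLL (K : Set E) (x y : E) : Prop := y - x ∈ interior K

/-- `K` is a closed convex cone inducing a partial order. -/
def IsConeOrder (K : Set E) : Prop :=
  IsClosed K ∧ Convex ℝ K ∧
  (∀ x ∈ K, ∀ α : ℝ, 0 < α → α • x ∈ K) ∧
  (∀ x ∈ K, ∀ y ∈ K, x + y ∈ K) ∧
  K ∩ (-K) = {0}

/-- Closed order interval `[a,b]`. -/
def ordCC (K : Set E) (a b : E) : Set E := {z | coneLE K a z ∧ coneLE K z b}

/-- Open order interval `[[a,b]]`. -/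
def ordOO (K : Set E) (a b : E) : Set E := {z | coneLL K a z ∧ coneLL K z b}

/-- `X` is order-convex. -/
def OrderConvexSet (K X : Set E) : Prop :=
  ∀ a ∈ X, ∀ b ∈ X, coneLT K a b → ordCC K a b ⊆ X

/-- `F` is strongly monotone with respect to the cone `K`. -/
def StronglyMonotoneMap (K : Set E) (F : E → E) : Prop :=
  ∀ x y : E, coneLT K x y → coneLL K (F x) (F y)

/-- The semi-orbit `O⁺(x)` of `x` under `F`. -/
def semiOrbit (F : E → E) (x : E) : Set E := {y | ∃ n : ℕ, y = F^[n] x}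

/-- The ω-limit set of `x` under `F`. -/
def omegaSet (F : E → E) (x : E) : Set E := ⋂ k : ℕ, closure (semiOrbit F (F^[k] x))

/-- `F` is ω-compact in `S ⊆ X`. -/
def OmegaCompactIn (F : E → E) (X S : Set E) : Prop :=
  (∀ x ∈ S, IsCompact (closure (semiOrbit F x)) ∧ closure (semiOrbit F x) ⊆ X) ∧
  IsCompact (closure (⋃ x ∈ S, omegaSet F x)) ∧ closure (⋃ x ∈ S, omegaSet F x) ⊆ X

/-- Hypothesis (H2): ω-compactness in every closed order interval of `X`. -/
def OmegaCompactIntervals (K : Set E) (F : E → E) (X : Set E) : Prop :=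
  ∀ a ∈ X, ∀ b ∈ X, coneLE K a b → OmegaCompactIn F X (ordCC K a b)

/-- The upper ω-limit set `ω₊(x)`. -/
def omegaPlus (K : Set E) (F : E → E) (X : Set E) (x : E) : Set E :=
  ⋂ u ∈ {u ∈ X | coneLL K x u},
    closure (⋃ y ∈ {y ∈ X | coneLT K x y ∧ coneLE K y u}, omegaSet F y)

/-- The lower ω-limit set `ω₋(x)`. -/
def omegaMinus (K : Set E) (F : E → E) (X : Set E) (x : E) : Set E :=
  ⋂ u ∈ {u ∈ X | coneLL K u x},
    closure (⋃ y ∈ {y ∈ X | coneLT K y x ∧ coneLE K u y}, omegaSet F y)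

/-- The upper ω-unstable set `U₊`. -/
def Uplus (K : Set E) (F : E → E) (X : Set E) : Set E :=
  {x ∈ X | omegaPlus K F X x ≠ omegaSet F x}

/-- The lower ω-unstable set `U₋`. -/
def Uminus (K : Set E) (F : E → E) (X : Set E) : Set E :=
  {x ∈ X | omegaMinus K F X x ≠ omegaSet F x}

/-- `q` is a periodic point of `F` with minimal period `p ≥ 1`. -/
def IsMinPeriodicPt (F : E → E) (p : ℕ) (q : E) : Prop :=
  1 ≤ p ∧ F^[p] q = q ∧ ∀ l : ℕ, 1 ≤ l → l < p → F^[l] q ≠ q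

/-- `C` is a linearly stable cycle of `F`: the (semi-)orbit of a periodic point of some
minimal period `p` such that the spectral radius of the derivative of `F^[p]` at every
point of the cycle is at most `1`. -/
def IsLinearlyStableCycle (F : E → E) (C : Set E) : Prop :=
  ∃ (q : E) (p : ℕ), IsMinPeriodicPt F p q ∧ C = semiOrbit F q ∧
    ∀ z ∈ semiOrbit F q, ∃ L : E →L[ℝ] E,
      HasFDerivAt (F^[p]) L z ∧ spectralRadius ℝ L ≤ 1

/-- Hypothesis (H3): `F` is C¹ and each derivative is a compact strongly positive operator. -/
def SmoothStronglyPositive (K : Set E) (F : E → E) : Prop :=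
  ∃ F' : E → (E →L[ℝ] E), Continuous F' ∧ (∀ x : E, HasFDerivAt F (F' x) x) ∧
    (∀ x : E, IsCompactOperator ⇑(F' x)) ∧
    ∀ x v : E, coneLT K 0 v → coneLL K 0 (F' x v)

/-- A Borel set `W` is shy: there is a nonzero compactly supported Borel measure `μ` with
`μ (x + W) = 0` for every `x`. -/
def IsShyBorel (W : Set E) : Prop :=
  MeasurableSet W ∧ ∃ μ : Measure E, μ ≠ 0 ∧
    (∃ Q : Set E, IsCompact Q ∧ μ Qᶜ = 0) ∧
    ∀ x : E, μ ((fun y => y - x) ⁻¹' W) = 0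

/-- A set is shy if it is contained in a shy Borel set. -/
def IsShy (W : Set E) : Prop := ∃ W' : Set E, W ⊆ W' ∧ IsShyBorel W'

/-- `S` is prevalent in `A` if `A \ S` is shy. -/
def PrevalentIn (S A : Set E) : Prop := IsShy (A \ S)

/-- An order decomposition `(A, B')` of `X`: both nonempty, relatively closed in `X`,
`A` lower closed, `B'` upper closed, `A ∪ B' = X` and `int (A ∩ B') = ∅`. -/
def IsOrderDecomp (K X A B' : Set E) : Prop :=
  A.Nonempty ∧ B'.Nonempty ∧ A ⊆ X ∧ B' ⊆ X ∧
  closure A ∩ X ⊆ A ∧ closure B' ∩ X ⊆ B' ∧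
  (∀ a ∈ A, ∀ z ∈ X, coneLE K z a → z ∈ A) ∧
  (∀ b ∈ B', ∀ z ∈ X, coneLE K b z → z ∈ B') ∧
  A ∪ B' = X ∧ interior (A ∩ B') = ∅

/-- An invariant order decomposition of `X`. -/
def IsInvOrderDecomp (K X : Set E) (F : E → E) (A B' : Set E) : Prop :=
  IsOrderDecomp K X A B' ∧ F '' A ⊆ A ∧ F '' B' ⊆ B'

/-- A set is unordered if it contains no two points `x < y`. -/
def UnorderedSet (K S : Set E) : Prop := ∀ x ∈ S, ∀ y ∈ S, ¬ coneLT K x y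

/-- An invariant order resolution of `X`. -/
def IsInvOrderResolution (K X : Set E) (F : E → E) (Γ : Set (Set E × Set E)) : Prop :=
  (∀ p ∈ Γ, IsInvOrderDecomp K X F p.1 p.2) ∧
  (∀ p ∈ Γ, ∀ q ∈ Γ, p.1 ⊆ q.1 ∨ q.1 ⊆ p.1) ∧
  (∀ x ∈ X, UnorderedSet K (semiOrbit F x) → ∃ p ∈ Γ, semiOrbit F x ⊆ p.1 ∩ p.2)

/-- Hypothesis (H4): the group `G` acts on `X` by an increasing, jointly continuous
action whose homeomorphisms commute with `F`. -/
def GroupActsOn {G : Type*} [Group G] [TopologicalSpace G]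
    (K X : Set E) (F : E → E) (act : G → E → E) : Prop :=
  ContinuousOn (fun p : G × E => act p.1 p.2) (Set.univ ×ˢ X) ∧
  (∀ g : G, Set.MapsTo (act g) X X) ∧
  (∀ x ∈ X, act (1 : G) x = x) ∧
  (∀ g h : G, ∀ x ∈ X, act (g * h) x = act g (act h x)) ∧
  (∀ g : G, ∀ x ∈ X, ∀ y ∈ X, coneLE K x y → coneLE K (act g x) (act g y)) ∧
  (∀ g : G, ∀ x ∈ X, act g (F x) = F (act g x))

/-- A set `S` is `G`-symmetric if every point of `S` is fixed by every group element. -/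
def GSymmetricSet {G : Type*} (act : G → E → E) (S : Set E) : Prop :=
  ∀ z ∈ S, ∀ g : G, act g z = z

/-!
The derivatives `DF^n(x)` form a cocycle of compact strongly positive operators. Fix an order unit
`e` and a positive functional `φ`. On a segment parallel to `e`, the integral of `φ (DF^n(x) e)` is
by the fundamental theorem of calculus the increment of `φ ∘ F^n`, which is bounded in `n`. Summing
against weights of polynomial decay, for almost every point of the segment `‖DF^n(x) e‖` grows
subexponentially; the points where it does not therefore form a shy set.

Now let `‖DF^n(x) e‖` grow subexponentially. By a Krein-Rutman type exponential separation,
uniform over products of operators from a compact set, differences that stay incomparable to zero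
contract exponentially relative to the growth along `e`. Comparing `x` with a later point of its
precompact orbit close to it, either two iterates become comparable, and monotonicity makes the
orbit converge to a cycle, or the iterates contract towards each other, with the same conclusion.
A cycle of spectral radius above `1` would force exponential growth of `‖DF^n(x) e‖`.
-/

section OrderUnit

variable {V : Type*} [NormedAddCommGroup V] [PartialOrder V]

/-- The relation `v ≫ 0`: the vector `v` lies in the interior of the positive cone. -/
def IsOrderUnit (v : V) : Prop := v ∈ interior (Ici (0 : V))

variable {e v w : V}

theorem IsOrderUnit.nonneg (he : IsOrderUnit e) : 0 ≤ e :=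
  mem_Ici.mp (interior_subset he)

theorem IsOrderUnit.mono [IsOrderedAddMonoid V] (hv : IsOrderUnit v) (hvw : v ≤ w) :
    IsOrderUnit w :=
  (isUpperSet_Ici 0).interior hvw hv

variable [NormedSpace ℝ V]

open scoped Pointwise in
theorem IsOrderUnit.smul [IsOrderedModule ℝ V] (he : IsOrderUnit e) {c : ℝ} (hc : 0 < c) :
    IsOrderUnit (c • e) := by
  have hsub : c • Ici (0 : V) ⊆ Ici 0 := by
    rintro _ ⟨v, hv, rfl⟩
    exact smul_nonneg hc.le hv
  refine interior_mono hsub ?_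
  rw [interior_smul₀ hc.ne']
  exact smul_mem_smul_set he

variable [IsOrderedAddMonoid V]

theorem exists_pos_smul_le_of_isCompact (e : V) {S : Set V} (hS : IsCompact S)
    (hunit : ∀ s ∈ S, IsOrderUnit s) : ∃ c : ℝ, 0 < c ∧ ∀ s ∈ S, c • e ≤ s := by
  obtain ⟨δ, hδ, hsub⟩ := hS.exists_thickening_subset_open isOpen_interior hunit
  have hsmall : ∀ᶠ c : ℝ in 𝓝[>] 0, ‖c • e‖ < δ := by
    have hcont : ContinuousAt (fun c : ℝ => ‖c • e‖) 0 := by fun_prop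
    exact (hcont.tendsto.eventually_lt_const (by simpa using hδ)).filter_mono nhdsWithin_le_nhds
  obtain ⟨c, hcδ, hc⟩ := (hsmall.and self_mem_nhdsWithin).exists
  refine ⟨c, hc, fun s hs => sub_nonneg.mp ?_⟩
  have hmem : s - c • e ∈ Metric.thickening δ S :=
    Metric.mem_thickening_iff.mpr ⟨s, hs, by rwa [dist_self_sub_left]⟩
  exact interior_subset (hsub hmem)

variable [IsOrderedModule ℝ V]

theorem real_smul_le_smul_iff_of_pos_right (he : 0 < e) {α β : ℝ} : α • e ≤ β • e ↔ α ≤ β :=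
  have := SMulPosMono.toSMulPosStrictMono (α := ℝ) (β := V)
  smul_le_smul_iff_of_pos_right he

theorem IsOrderUnit.exists_le_smul_norm (he : IsOrderUnit e) :
    ∃ b : ℝ, 0 < b ∧ ∀ v : V, v ≤ (b * ‖v‖) • e := by
  obtain ⟨r, hr, hball⟩ := Metric.mem_nhds_iff.mp (mem_interior_iff_mem_nhds.mp he)
  refine ⟨2 / r, by positivity, fun v => ?_⟩
  rcases eq_or_ne v 0 with rfl | hv
  · simp
  have hmem : e - (r / (2 * ‖v‖)) • v ∈ Metric.ball e r := by
    rw [mem_ball_iff_norm', sub_sub_cancel, norm_smul, Real.norm_of_nonneg (by positivity)]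
    calc r / (2 * ‖v‖) * ‖v‖ = r / 2 := by field_simp
      _ < r := half_lt_self hr
  calc v = (2 / r * ‖v‖) • (r / (2 * ‖v‖)) • v := by
        rw [smul_smul, show 2 / r * ‖v‖ * (r / (2 * ‖v‖)) = 1 by field_simp, one_smul]
    _ ≤ (2 / r * ‖v‖) • e :=
        smul_le_smul_of_nonneg_left (sub_nonneg.mp (hball hmem)) (by positivity)

theorem IsOrderUnit.pos [Nontrivial V] (he : IsOrderUnit e) : 0 < e := by
  refine he.nonneg.lt_of_ne ?_
  rintro rfl
  obtain ⟨b, -, hb⟩ := he.exists_le_smul_norm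
  obtain ⟨v, hv⟩ := exists_ne (0 : V)
  have hneg : ∀ w : V, w ≤ 0 := fun w => by simpa only [smul_zero] using hb w
  exact hv (le_antisymm (hneg v) (neg_nonpos.mp (hneg (-v))))

theorem IsOrderUnit.norm_pos [Nontrivial V] (he : IsOrderUnit e) : 0 < ‖e‖ :=
  norm_pos_iff.mpr he.pos.ne'

theorem exists_pos_le_of_mem_Icc_neg_smul [OrderClosedTopology V] (he : 0 ≤ e) {S : Set V}
    (hS : IsCompact S) (hzero : (0 : V) ∉ S) :
    ∃ c : ℝ, 0 < c ∧ ∀ s ∈ S, ∀ α : ℝ, s ∈ Icc (-(α • e)) (α • e) → c ≤ α := by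
  by_contra! hcon
  choose s hs α hIcc hα using fun n : ℕ =>
    hcon (1 / ((n : ℝ) + 1)) Nat.one_div_pos_of_nat
  obtain ⟨x, hx, ψ, hψ, hlim⟩ := hS.tendsto_subseq hs
  have hbound : ∀ n, α n • e ≤ (1 / ((n : ℝ) + 1)) • e := fun n =>
    smul_le_smul_of_nonneg_right (hα n).le he
  have hvanish : Tendsto (fun n => (1 / ((ψ n : ℝ) + 1)) • e) atTop (𝓝 0) := by
    simpa using ((tendsto_one_div_add_atTop_nhds_zero_nat (𝕜 := ℝ)).comp
      hψ.tendsto_atTop).smul_const e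
  have hxle : x ≤ 0 :=
    le_of_tendsto_of_tendsto' hlim hvanish fun n => (hIcc _).2.trans (hbound _)
  have hlex : -0 ≤ x :=
    le_of_tendsto_of_tendsto' hvanish.neg hlim fun n => (neg_le_neg (hbound _)).trans (hIcc _).1
  rw [neg_zero] at hlex
  exact hzero (le_antisymm hxle hlex ▸ hx)

theorem IsOrderUnit.exists_positive_functional [Nontrivial V] (he : IsOrderUnit e) :
    ∃ φ : V →L[ℝ] ℝ, 0 < φ e ∧ ∀ v, 0 ≤ v → 0 ≤ φ v := by
  obtain ⟨f, hf⟩ := geometric_hahn_banach_open_point (convex_Ici (0 : V)).interior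
    isOpen_interior fun h => (IsOrderUnit.pos h).false
  simp only [map_zero] at hf
  refine ⟨-f, neg_pos.mpr (hf e he), fun v hv => ?_⟩
  rw [neg_apply, neg_nonneg]
  by_contra! hfv
  have hunit : IsOrderUnit (e + (-f e / f v) • v) :=
    he.mono (le_add_of_nonneg_right
      (smul_nonneg (div_nonneg (neg_nonneg.mpr (hf e he).le) hfv.le) hv))
  have hneg : f e + -f e / f v * f v < 0 := by simpa using hf _ hunit
  rw [div_mul_cancel₀ (-f e) hfv.ne', add_neg_cancel] at hneg
  exact hneg.false

end OrderUnit

theorem isCompact_closure_image2_closedBall {X Y : Type*} [NormedAddCommGroup X]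
    [NormedSpace ℝ X] [NormedAddCommGroup Y] [NormedSpace ℝ Y] [CompleteSpace Y]
    {A : Set (X →L[ℝ] Y)} (hA : IsCompact A) (hAc : ∀ T ∈ A, IsCompactOperator T) (r : ℝ) :
    IsCompact (closure (image2 (fun T v => T v) A (Metric.closedBall 0 r))) := by
  refine (TotallyBounded.closure ?_).isCompact_of_isClosed isClosed_closure
  rw [Metric.totallyBounded_iff]
  intro ε hε
  obtain ⟨t, htA, htfin, hcover⟩ := hA.finite_cover_balls (e := ε / (2 * (|r| + 1)))
    (by positivity)
  have himages : TotallyBounded (⋃ T ∈ t, T '' Metric.closedBall 0 r) := by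
    refine (totallyBounded_biUnion htfin).mpr fun T hT => ?_
    exact ((hAc T (htA hT)).isCompact_closure_image_closedBall (f := (T : X →ₛₗ[RingHom.id ℝ] Y))
      r).totallyBounded.subset subset_closure
  obtain ⟨s, hsfin, hs⟩ := Metric.totallyBounded_iff.mp himages (ε / 2) (half_pos hε)
  refine ⟨s, hsfin, ?_⟩
  rintro _ ⟨T, hT, v, hv, rfl⟩
  obtain ⟨T', hT't, hTT'⟩ := mem_iUnion₂.mp (hcover hT)
  obtain ⟨y, hys, hy⟩ := mem_iUnion₂.mp (hs (mem_biUnion hT't (mem_image_of_mem T' hv)))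
  have hclose : dist (T v) (T' v) < ε / 2 :=
    calc dist (T v) (T' v) = ‖(T - T') v‖ := by rw [dist_eq_norm, sub_apply]
      _ ≤ ‖T - T'‖ * (|r| + 1) := by
        refine (T - T').le_opNorm_of_le ((mem_closedBall_zero_iff.mp hv).trans ?_)
        linarith [le_abs_self r]
      _ < ε / (2 * (|r| + 1)) * (|r| + 1) := by
        have := mem_ball_iff_norm.mp hTT'
        gcongr
      _ = ε / 2 := by field_simp
  exact mem_biUnion hys ((dist_triangle _ _ _).trans_lt
    ((add_lt_add hclose (Metric.mem_ball.mp hy)).trans_eq (add_halves ε)))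

section StronglyPositive

variable {V : Type*} [NormedAddCommGroup V] [NormedSpace ℝ V] [PartialOrder V]

/-- An operator is strongly positive if it maps every `v > 0` to some `T v ≫ 0`. -/
def StronglyPositive (T : V →L[ℝ] V) : Prop := ∀ v, 0 < v → IsOrderUnit (T v)

/-- A norm-compact set of compact strongly positive operators. The estimates below hold
uniformly over all products of elements of such a set. -/
structure IsCompactStronglyPositive (A : Set (V →L[ℝ] V)) : Prop where
  isCompact : IsCompact A
  isCompactOperator : ∀ T ∈ A, IsCompactOperator T
  stronglyPositive : ∀ T ∈ A, StronglyPositive T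

variable {v : V} {T : V →L[ℝ] V} {A : Set (V →L[ℝ] V)}

theorem StronglyPositive.map_nonneg (hT : StronglyPositive T) (hv : 0 ≤ v) : 0 ≤ T v := by
  rcases hv.eq_or_lt with rfl | hv
  · rw [map_zero]
  · exact (hT v hv).nonneg

theorem StronglyPositive.isCompactStronglyPositive_singleton (hT : StronglyPositive T)
    (hTc : IsCompactOperator T) : IsCompactStronglyPositive {T} :=
  ⟨isCompact_singleton, fun _ hS => hS ▸ hTc, fun _ hS => hS ▸ hT⟩

variable [IsOrderedAddMonoid V]

theorem StronglyPositive.monotone (hT : StronglyPositive T) : Monotone T := fun x y hxy => by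
  simpa only [map_sub, sub_nonneg] using hT.map_nonneg (sub_nonneg.mpr hxy)

theorem IsCompactStronglyPositive.exists_smul_le_apply (hA : IsCompactStronglyPositive A) (e : V)
    {S : Set V} (hS : IsCompact S) (hpos : ∀ v ∈ S, 0 < v) :
    ∃ c : ℝ, 0 < c ∧ ∀ T ∈ A, ∀ v ∈ S, c • e ≤ T v := by
  have himage : IsCompact (image2 (fun T v => T v) A S) := by
    rw [← image_prod]
    exact (hA.isCompact.prod hS).image (by fun_prop)
  obtain ⟨c, hc, hle⟩ := exists_pos_smul_le_of_isCompact e himage <| by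
    rintro _ ⟨T, hT, v, hv, rfl⟩
    exact hA.stronglyPositive T hT v (hpos v hv)
  exact ⟨c, hc, fun T hT v hv => hle _ (mem_image2_of_mem hT hv)⟩

end StronglyPositive

section HarnackBound

variable {V : Type*} [NormedAddCommGroup V] [NormedSpace ℝ V] [PartialOrder V]

/-- The Harnack inequality `‖v‖ e ≤ B v`, which keeps `v` quantitatively inside the cone. -/
def HarnackBound (e : V) (B : ℝ) (v : V) : Prop := ‖v‖ • e ≤ B • v

variable {e v : V} {T : V →L[ℝ] V} {A : Set (V →L[ℝ] V)}

variable [IsOrderedModule ℝ V]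

theorem HarnackBound.smul_le_apply {B κ : ℝ} (h : HarnackBound e B v) (hT : Monotone T)
    (hκ : κ • e ≤ T e) : (κ * ‖v‖) • e ≤ B • T v :=
  calc (κ * ‖v‖) • e = ‖v‖ • κ • e := by rw [mul_comm, mul_smul]
    _ ≤ ‖v‖ • T e := smul_le_smul_of_nonneg_left hκ (norm_nonneg v)
    _ = T (‖v‖ • e) := (map_smul _ _ _).symm
    _ ≤ T (B • v) := hT h
    _ = B • T v := map_smul _ _ _

variable [IsOrderedAddMonoid V]

theorem HarnackBound.mono {B B' : ℝ} (h : HarnackBound e B v) (hv : 0 ≤ v) (hB : B ≤ B') :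
    HarnackBound e B' v :=
  h.trans (smul_le_smul_of_nonneg_right hB hv)

theorem harnackBound_of_norm_le (he : 0 ≤ e) {B C r : ℝ} (hC : 0 ≤ C) (hnorm : ‖v‖ ≤ C * r)
    (h : r • e ≤ B • v) : HarnackBound e (C * B) v :=
  calc ‖v‖ • e ≤ (C * r) • e := smul_le_smul_of_nonneg_right hnorm he
    _ = C • r • e := mul_smul _ _ _
    _ ≤ C • B • v := smul_le_smul_of_nonneg_left h hC
    _ = (C * B) • v := (mul_smul _ _ _).symm

theorem HarnackBound.exists_mul_norm_le [Nontrivial V] (hA : IsCompactStronglyPositive A)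
    (he : IsOrderUnit e) {B : ℝ} (hB : 0 < B) :
    ∃ c : ℝ, 0 < c ∧ ∀ T ∈ A, ∀ v, HarnackBound e B v → c * ‖v‖ ≤ ‖T v‖ := by
  obtain ⟨κ, hκ, hκe⟩ := hA.exists_smul_le_apply e (S := {e}) isCompact_singleton
    fun v hv => hv ▸ he.pos
  obtain ⟨b, hb, hbound⟩ := he.exists_le_smul_norm
  refine ⟨κ / (B * b), by positivity, fun T hT v hv => ?_⟩
  have hle : (κ * ‖v‖) • e ≤ (B * (b * ‖T v‖)) • e :=
    calc (κ * ‖v‖) • e ≤ B • T v :=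
        hv.smul_le_apply (hA.stronglyPositive T hT).monotone (hκe T hT e rfl)
      _ ≤ B • (b * ‖T v‖) • e := smul_le_smul_of_nonneg_left (hbound _) hB.le
      _ = _ := (mul_smul _ _ _).symm
  rw [real_smul_le_smul_iff_of_pos_right he.pos] at hle
  rw [div_mul_eq_mul_div, div_le_iff₀ (by positivity)]
  linarith

variable [OrderClosedTopology V] [CompleteSpace V]

theorem IsCompactStronglyPositive.exists_smul_norm_le_apply_apply
    (hA : IsCompactStronglyPositive A) (e : V) {κ : ℝ} (hκ : 0 < κ) :
    ∃ c : ℝ, 0 < c ∧ ∀ S ∈ A, ∀ T ∈ A, ∀ v, 0 ≤ S v → κ * ‖v‖ ≤ ‖S v‖ →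
      (c * ‖v‖) • e ≤ T (S v) := by
  set K := closure (image2 (fun T v => T v) A (Metric.closedBall 0 1)) ∩ (Ici 0 ∩ {w | κ ≤ ‖w‖})
  have hK : IsCompact K :=
    (isCompact_closure_image2_closedBall hA.isCompact hA.isCompactOperator 1).inter_right
      (isClosed_Ici.inter (isClosed_le continuous_const continuous_norm))
  obtain ⟨c, hc, hle⟩ := hA.exists_smul_le_apply e hK fun w hw =>
    hw.2.1.lt_of_ne' (norm_pos_iff.mp (hκ.trans_le hw.2.2))
  refine ⟨c, hc, fun S hS T hT v hSv hnorm => ?_⟩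
  rcases eq_or_ne v 0 with rfl | hv
  · simp
  have hv : 0 < ‖v‖ := norm_pos_iff.mpr hv
  have hmem : ‖v‖⁻¹ • S v ∈ K := by
    refine ⟨subset_closure ⟨S, hS, ‖v‖⁻¹ • v, ?_, map_smul _ _ _⟩,
      smul_nonneg (by positivity) hSv, ?_⟩
    · rw [mem_closedBall_zero_iff, norm_smul, norm_inv, norm_norm, inv_mul_cancel₀ hv.ne']
    · rw [mem_ofPred_eq, norm_smul, norm_inv, norm_norm, le_inv_mul_iff₀ hv]
      linarith
  calc (c * ‖v‖) • e = ‖v‖ • c • e := by rw [mul_comm, mul_smul]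
    _ ≤ ‖v‖ • T (‖v‖⁻¹ • S v) := smul_le_smul_of_nonneg_left (hle T hT _ hmem) hv.le
    _ = T (S v) := by rw [map_smul, smul_inv_smul₀ hv.ne']

theorem IsCompactStronglyPositive.exists_norm_le_of_mem_Icc
    (hA : IsCompactStronglyPositive A) (he : 0 < e) {ε : ℝ} (hε : 0 < ε) :
    ∃ C : ℝ, 0 < C ∧ ∀ T ∈ A, ∀ v, ∀ α : ℝ, T v ∈ Icc (-(α • e)) (α • e) →
      ‖T v‖ ≤ ε * ‖v‖ + C * α := by
  obtain ⟨M, hM, hbound⟩ := hA.isCompact.isBounded.exists_pos_norm_le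
  set K := closure (image2 (fun T v => T v) A (Metric.closedBall 0 1)) ∩ {w | ε ≤ ‖w‖}
  have hK : IsCompact K :=
    (isCompact_closure_image2_closedBall hA.isCompact hA.isCompactOperator 1).inter_right
      (isClosed_le continuous_const continuous_norm)
  obtain ⟨c, hc, hle⟩ := exists_pos_le_of_mem_Icc_neg_smul he.le hK fun h =>
    hε.not_ge (by simpa using h.2)
  refine ⟨M / c, by positivity, fun T hT v α hα => ?_⟩
  have hα₀ : 0 ≤ α := by
    have : (-α) • e ≤ α • e := (neg_smul α e).trans_le (hα.1.trans hα.2)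
    rw [real_smul_le_smul_iff_of_pos_right he] at this
    linarith
  rcases le_or_gt ‖T v‖ (ε * ‖v‖) with hsmall | hlarge
  · exact le_add_of_le_of_nonneg hsmall (by positivity)
  have hv : 0 < ‖v‖ := norm_pos_iff.mpr <| by
    rintro rfl
    simp at hlarge
  have hmem : ‖v‖⁻¹ • T v ∈ K := by
    refine ⟨subset_closure ⟨T, hT, ‖v‖⁻¹ • v, ?_, map_smul _ _ _⟩, ?_⟩
    · rw [mem_closedBall_zero_iff, norm_smul, norm_inv, norm_norm, inv_mul_cancel₀ hv.ne']
    · rw [mem_ofPred_eq, norm_smul, norm_inv, norm_norm, le_inv_mul_iff₀ hv]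
      linarith
  have hcα : c ≤ ‖v‖⁻¹ * α := by
    have hv' : 0 ≤ ‖v‖⁻¹ := by positivity
    refine hle _ hmem _ ⟨?_, ?_⟩
    · simpa only [smul_neg, mul_smul] using smul_le_smul_of_nonneg_left hα.1 hv'
    · simpa only [mul_smul] using smul_le_smul_of_nonneg_left hα.2 hv'
  calc ‖T v‖ ≤ M * ‖v‖ := T.le_of_opNorm_le (hbound T hT) v
    _ = M / c * (c * ‖v‖) := by field_simp
    _ ≤ M / c * α := by
      rw [le_inv_mul_iff₀ hv] at hcα
      gcongr
      linarith
    _ ≤ ε * ‖v‖ + M / c * α := le_add_of_nonneg_left (by positivity)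

end HarnackBound

section Cocycle

variable {V : Type*} [NormedAddCommGroup V] [NormedSpace ℝ V]

/-- The product `T (n-1) ∘ ⋯ ∘ T 0` of the first `n` terms of a sequence of operators. -/
noncomputable def cocycle (T : ℕ → V →L[ℝ] V) : ℕ → V →L[ℝ] V
  | 0 => .id ℝ V
  | n + 1 => T n ∘L cocycle T n

theorem cocycle_zero_apply (T : ℕ → V →L[ℝ] V) (v : V) : cocycle T 0 v = v := rfl

theorem cocycle_succ_apply (T : ℕ → V →L[ℝ] V) (n : ℕ) (v : V) :
    cocycle T (n + 1) v = T n (cocycle T n v) := rfl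

theorem cocycle_add_apply (T : ℕ → V →L[ℝ] V) (k n : ℕ) (v : V) :
    cocycle T (k + n) v = cocycle (fun j => T (k + j)) n (cocycle T k v) := by
  induction n with
  | zero => rfl
  | succ n ih => rw [← add_assoc, cocycle_succ_apply, ih, cocycle_succ_apply]

theorem cocycle_const (T : V →L[ℝ] V) (n : ℕ) : cocycle (fun _ => T) n = T ^ n := by
  induction n with
  | zero => rfl
  | succ n ih => rw [cocycle, ih, pow_succ', ContinuousLinearMap.mul_def]

theorem isCompactOperator_cocycle {T : ℕ → V →L[ℝ] V} (hT : ∀ n, IsCompactOperator (T n)) {n : ℕ}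
    (hn : 0 < n) : IsCompactOperator (cocycle T n) := by
  obtain ⟨n, rfl⟩ := Nat.exists_eq_succ_of_ne_zero hn.ne'
  exact (hT n).comp_clm (cocycle T n)

variable [PartialOrder V] {A : Set (V →L[ℝ] V)} {T : ℕ → V →L[ℝ] V} {e v : V}

theorem cocycle_apply_nonneg (hT : ∀ n, StronglyPositive (T n)) (hv : 0 ≤ v) (n : ℕ) :
    0 ≤ cocycle T n v := by
  induction n with
  | zero => exact hv
  | succ n ih => exact (hT n).map_nonneg ih

variable [IsOrderedAddMonoid V]

theorem cocycle_monotone (hT : ∀ n, StronglyPositive (T n)) (n : ℕ) : Monotone (cocycle T n) := by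
  induction n with
  | zero => exact monotone_id
  | succ n ih => exact (hT n).monotone.comp ih

variable [IsOrderedModule ℝ V]

theorem cocycle_apply_le_pow_smul {S : ℕ → V →L[ℝ] V} (hS : ∀ n, StronglyPositive (S n)) {σ : ℝ}
    (hσ : 0 ≤ σ) {n : ℕ} (h : ∀ k < n, T k (cocycle T k v) ≤ σ • S k (cocycle T k v)) :
    cocycle T n v ≤ σ ^ n • cocycle S n v := by
  induction n with
  | zero => rw [pow_zero, one_smul, cocycle_zero_apply, cocycle_zero_apply]
  | succ n ih =>
    calc cocycle T (n + 1) v ≤ σ • S n (cocycle T n v) := h n n.lt_succ_self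
      _ ≤ σ • S n (σ ^ n • cocycle S n v) := smul_le_smul_of_nonneg_left
        ((hS n).monotone (ih fun k hk => h k (hk.trans n.lt_succ_self))) hσ
      _ = σ ^ (n + 1) • cocycle S (n + 1) v := by
        rw [map_smul, smul_smul, ← pow_succ', cocycle_succ_apply]

theorem cocycle_apply_pos (hT : ∀ n, StronglyPositive (T n)) (hv : 0 < v) (n : ℕ) :
    0 < cocycle T n v := by
  have : Nontrivial V := nontrivial_of_lt 0 v hv
  induction n with
  | zero => exact hv
  | succ n ih => exact (hT n _ ih).pos

theorem stronglyPositive_cocycle (hT : ∀ n, StronglyPositive (T n)) {n : ℕ} (hn : 0 < n) :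
    StronglyPositive (cocycle T n) := by
  obtain ⟨n, rfl⟩ := Nat.exists_eq_succ_of_ne_zero hn.ne'
  exact fun v hv => hT n _ (cocycle_apply_pos hT hv n)

variable [OrderClosedTopology V] [CompleteSpace V]

-- Either `S v` has lost most of the norm of `v`, so that the bound for `v` already controls it,
-- or it is comparable to `v` in norm, and then compactness controls `T (S v)`.
theorem IsCompactStronglyPositive.exists_harnackBound_step
    (hA : IsCompactStronglyPositive A) (he : 0 < e) :
    ∃ B₀ B₁ : ℝ, 0 < B₀ ∧ HarnackBound e B₀ e ∧ ∀ S ∈ A, ∀ T ∈ A, ∀ v, 0 ≤ v →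
      HarnackBound e B₀ v →
        HarnackBound e B₀ (S v) ∨ HarnackBound e B₁ (S v) ∧ HarnackBound e B₀ (T (S v)) := by
  obtain ⟨M, hM, hbound⟩ := hA.isCompact.isBounded.exists_pos_norm_le
  obtain ⟨κ, hκ, hκe⟩ := hA.exists_smul_le_apply e (S := {e}) isCompact_singleton
    fun v hv => hv ▸ he
  obtain ⟨c, hc, hc_le⟩ := hA.exists_smul_norm_le_apply_apply e hκ
  set B₀ := max ‖e‖ (M ^ 2 / c)
  refine ⟨B₀, M / κ * B₀, lt_max_of_lt_left (norm_pos_iff.mpr he.ne'),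
    smul_le_smul_of_nonneg_right (le_max_left _ _) he.le, fun S hS T hT v hv hvB => ?_⟩
  have hSv : 0 ≤ S v := (hA.stronglyPositive S hS).map_nonneg hv
  have hlower : (κ * ‖v‖) • e ≤ B₀ • S v :=
    hvB.smul_le_apply (hA.stronglyPositive S hS).monotone (hκe S hS e rfl)
  have hnormS : ‖S v‖ ≤ M * ‖v‖ := S.le_of_opNorm_le (hbound S hS) v
  rcases le_total ‖S v‖ (κ * ‖v‖) with hsmall | hlarge
  · exact .inl ((smul_le_smul_of_nonneg_right hsmall he.le).trans hlower)
  refine .inr ⟨harnackBound_of_norm_le he.le (by positivity) ?_ hlower, ?_⟩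
  · calc ‖S v‖ ≤ M * ‖v‖ := hnormS
      _ = M / κ * (κ * ‖v‖) := by field_simp
  · have hTS : HarnackBound e (M ^ 2 / c * 1) (T (S v)) := by
      refine harnackBound_of_norm_le (r := c * ‖v‖) he.le (by positivity) ?_ ?_
      · calc ‖T (S v)‖ ≤ M * ‖S v‖ := T.le_of_opNorm_le (hbound T hT) _
          _ ≤ M * (M * ‖v‖) := by gcongr
          _ = M ^ 2 / c * (c * ‖v‖) := by field_simp
      · simpa only [one_smul] using hc_le S hS T hT v hSv hlarge
    exact hTS.mono ((hA.stronglyPositive T hT).map_nonneg hSv)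
      ((mul_one _).trans_le (le_max_right _ _))

theorem IsCompactStronglyPositive.exists_harnackBound_cocycle
    (hA : IsCompactStronglyPositive A) (he : 0 < e) :
    ∃ B : ℝ, 0 < B ∧ ∀ T : ℕ → V →L[ℝ] V, (∀ n, T n ∈ A) → ∀ n,
      HarnackBound e B (cocycle T n e) := by
  obtain ⟨B₀, B₁, hB₀, hzero, hstep⟩ := hA.exists_harnackBound_step he
  refine ⟨max B₀ B₁, lt_max_of_lt_left hB₀, fun T hT n => ?_⟩
  have hnonneg := cocycle_apply_nonneg (fun n => hA.stronglyPositive _ (hT n)) he.le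
  have hclaim : ∀ n, HarnackBound e B₀ (cocycle T n e) ∨
      HarnackBound e B₁ (cocycle T n e) ∧ HarnackBound e B₀ (cocycle T (n + 1) e) := by
    intro n
    induction n with
    | zero => exact .inl hzero
    | succ n ih =>
      rcases ih with h | h
      · exact hstep _ (hT n) _ (hT (n + 1)) _ (hnonneg n) h
      · exact .inl h.2
  rcases hclaim n with h | h
  · exact h.mono (hnonneg n) (le_max_left _ _)
  · exact h.1.mono (hnonneg n) (le_max_right _ _)

end Cocycle

section ExponentialSeparation

variable {V : Type*} [NormedAddCommGroup V] [NormedSpace ℝ V] [PartialOrder V]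

/-- `v` is dominated by `τ u`, both in the order and, up to the factor `Λ`, in norm. -/
def Dominated (Λ τ : ℝ) (u v : V) : Prop := v ∈ Icc (-(τ • u)) (τ • u) ∧ ‖v‖ ≤ Λ * τ * ‖u‖

variable {A : Set (V →L[ℝ] V)} {e u v : V} {B Λ τ : ℝ}

variable [IsOrderedAddMonoid V] [IsOrderedModule ℝ V]

theorem Dominated.mono {Λ' τ' : ℝ} (h : Dominated Λ τ u v) (hu : 0 ≤ u) (hτ : τ ≤ τ')
    (hΛ : Λ * τ ≤ Λ' * τ') : Dominated Λ' τ' u v := by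
  have hle : τ • u ≤ τ' • u := smul_le_smul_of_nonneg_right hτ hu
  exact ⟨Icc_subset_Icc (neg_le_neg hle) hle h.1, h.2.trans (by gcongr)⟩

theorem IsOrderUnit.exists_dominated [Nontrivial V] (he : IsOrderUnit e) (hΛ : 0 < Λ) :
    ∃ t : ℝ, 0 < t ∧ ∀ v : V, Dominated Λ (t * ‖v‖) e v := by
  obtain ⟨b, hb, hbound⟩ := he.exists_le_smul_norm
  have he_norm := he.norm_pos
  refine ⟨b + 1 / (Λ * ‖e‖), by positivity, fun v => ?_⟩
  have hle : ∀ w : V, w ≤ ((b + 1 / (Λ * ‖e‖)) * ‖w‖) • e := fun w => by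
    refine (hbound w).trans (smul_le_smul_of_nonneg_right ?_ he.nonneg)
    gcongr
    exact le_add_of_nonneg_right (by positivity)
  refine ⟨⟨neg_le.mp (by simpa only [norm_neg] using hle (-v)), hle v⟩, ?_⟩
  calc ‖v‖ ≤ Λ * b * ‖v‖ * ‖e‖ + ‖v‖ := le_add_of_nonneg_left (by positivity)
    _ = Λ * ((b + 1 / (Λ * ‖e‖)) * ‖v‖) * ‖e‖ := by field_simp

variable [OrderClosedTopology V] [CompleteSpace V]

theorem IsCompactStronglyPositive.exists_dominated_half [Nontrivial V]
    (hA : IsCompactStronglyPositive A) (he : IsOrderUnit e) (hB : 0 < B) :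
    ∃ Λ : ℝ, 0 < Λ ∧ ∀ T ∈ A, ∀ u v, ∀ τ : ℝ, 0 ≤ τ → HarnackBound e B u →
      Dominated Λ τ u v → Dominated (Λ / 2) τ (T u) (T v) := by
  obtain ⟨b, hb, hbound⟩ := he.exists_le_smul_norm
  obtain ⟨c, hc, hlower⟩ := HarnackBound.exists_mul_norm_le hA he hB
  obtain ⟨C, hC, hehrling⟩ := hA.exists_norm_le_of_mem_Icc he.pos (ε := c / 4) (by positivity)
  refine ⟨4 * C * b, by positivity, fun T hT u v τ hτ hu hv => ?_⟩
  have hmono := (hA.stronglyPositive T hT).monotone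
  have hIcc : T v ∈ Icc (-(τ • T u)) (τ • T u) := by
    simpa only [map_neg, map_smul] using hmono.mapsTo_Icc hv.1
  have hTu : τ • T u ≤ (b * (τ * ‖T u‖)) • e := by
    rw [mul_left_comm, mul_smul]
    exact smul_le_smul_of_nonneg_left (hbound _) hτ
  refine ⟨hIcc, ?_⟩
  calc ‖T v‖ ≤ c / 4 * ‖v‖ + C * (b * (τ * ‖T u‖)) :=
        hehrling T hT v _ (Icc_subset_Icc (neg_le_neg hTu) hTu hIcc)
    _ ≤ c / 4 * (4 * C * b * τ * ‖u‖) + C * (b * (τ * ‖T u‖)) := by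
        gcongr
        exact hv.2
    _ = C * b * τ * (c * ‖u‖) + C * b * τ * ‖T u‖ := by ring
    _ ≤ C * b * τ * ‖T u‖ + C * b * τ * ‖T u‖ := by
        gcongr
        exact hlower T hT u hu
    _ = 4 * C * b / 2 * τ * ‖T u‖ := by ring

-- By compactness, a strictly positive gap `S p - S q` becomes uniformly visible under `T`.
theorem IsCompactStronglyPositive.exists_contraction_of_norm_le
    (hA : IsCompactStronglyPositive A) (he : IsOrderUnit e) (hB : 0 < B) {R : ℝ} (hR : 0 < R) :
    ∃ γ : ℝ, 0 < γ ∧ ∀ S ∈ A, ∀ T ∈ A, ∀ p q, ‖p‖ ≤ R → ‖q‖ ≤ R → e ≤ B • S p → S q ≤ S p →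
      ¬ 0 ≤ S q → T (S q) ≤ (1 - γ) • T (S p) := by
  obtain ⟨b, hb, hbound⟩ := he.exists_le_smul_norm
  obtain ⟨M, hM, hnorm⟩ := hA.isCompact.isBounded.exists_pos_norm_le
  set K := closure (image2 (fun T v => T v) A (Metric.closedBall 0 R))
  have hK : IsCompact K := isCompact_closure_image2_closedBall hA.isCompact hA.isCompactOperator R
  have hgaps : IsCompact ((fun z : V × V => z.1 - z.2) ''
      ((K ×ˢ K) ∩ {z | e ≤ B • z.1 ∧ z.2 ≤ z.1 ∧ ¬ IsOrderUnit z.2})) :=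
    ((hK.prod hK).inter_right ((isClosed_le (by fun_prop) (by fun_prop)).inter
      ((isClosed_le (by fun_prop) (by fun_prop)).inter
        (isOpen_interior.isClosed_compl.preimage continuous_snd)))).image (by fun_prop)
  obtain ⟨c, hc, hgap⟩ := hA.exists_smul_le_apply e hgaps <| by
    rintro _ ⟨⟨x, w⟩, ⟨-, hx, hwx, hw⟩, rfl⟩
    have hxunit : IsOrderUnit x := by
      simpa only [inv_smul_smul₀ hB.ne'] using (he.mono hx).smul (inv_pos.mpr hB)
    exact sub_pos.mpr (hwx.lt_of_ne fun h => hw (h ▸ hxunit))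
  refine ⟨c / (b * (M * (M * R))), by positivity, fun S hS T hT p q hp hq hSp hle hSq => ?_⟩
  have hgapT : c • e ≤ T (S p) - T (S q) := by
    rw [← map_sub]
    exact hgap T hT _ ⟨(S p, S q), ⟨⟨subset_closure ⟨S, hS, p, mem_closedBall_zero_iff.mpr hp, rfl⟩,
      subset_closure ⟨S, hS, q, mem_closedBall_zero_iff.mpr hq, rfl⟩⟩, hSp, hle,
      fun h => hSq h.nonneg⟩, rfl⟩
  have hTSp : T (S p) ≤ (b * (M * (M * R))) • e := by
    refine (hbound _).trans (smul_le_smul_of_nonneg_right ?_ he.nonneg)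
    gcongr
    exact T.le_of_opNorm_le_of_le (hnorm T hT) (S.le_of_opNorm_le_of_le (hnorm S hS) hp)
  have hfrac : (c / (b * (M * (M * R)))) • T (S p) ≤ c • e :=
    (smul_le_smul_of_nonneg_left hTSp (by positivity)).trans_eq <| by
      rw [smul_smul, div_mul_cancel₀ _ (by positivity)]
  rw [sub_smul, one_smul]
  exact le_sub_comm.mp (hfrac.trans hgapT)

theorem IsCompactStronglyPositive.exists_contraction
    (hA : IsCompactStronglyPositive A) (he : IsOrderUnit e) (hB : 0 < B) {R : ℝ} (hR : 0 < R) :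
    ∃ γ : ℝ, 0 < γ ∧ ∀ S ∈ A, ∀ T ∈ A, ∀ u v, ∀ τ : ℝ, 0 < τ → S u ≠ 0 → ‖u‖ ≤ R * ‖S u‖ →
      ‖v‖ ≤ R * (τ * ‖S u‖) → HarnackBound e B (S u) → S v ≤ τ • S u → ¬ 0 ≤ S v →
        T (S v) ≤ ((1 - γ) * τ) • T (S u) := by
  obtain ⟨γ, hγ, hcontr⟩ := hA.exists_contraction_of_norm_le he hB hR
  refine ⟨γ, hγ, fun S hS T hT u v τ hτ hSu hu hv hharnack hle hSv => ?_⟩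
  have hs : 0 < ‖S u‖ := norm_pos_iff.mpr hSu
  set s := ‖S u‖
  have hτs : 0 < τ * s := mul_pos hτ hs
  have hscaled := hcontr S hS T hT (s⁻¹ • u) ((τ * s)⁻¹ • v)
    (by rwa [norm_smul_of_nonneg (by positivity), inv_mul_le_iff₀ hs, mul_comm])
    (by rwa [norm_smul_of_nonneg (by positivity), inv_mul_le_iff₀ hτs, mul_comm])
    (by
      rw [map_smul, smul_comm]
      exact (le_inv_smul_iff_of_pos hs).mpr hharnack)
    (by
      rw [map_smul, map_smul, inv_smul_le_iff_of_pos hτs, mul_smul, smul_inv_smul₀ hs.ne']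
      exact hle)
    (by
      rw [map_smul]
      exact fun h => hSv (by simpa only [smul_inv_smul₀ hτs.ne'] using smul_nonneg hτs.le h))
  simp only [map_smul] at hscaled
  rw [inv_smul_le_iff_of_pos hτs] at hscaled
  refine hscaled.trans_eq ?_
  rw [smul_smul, smul_smul]
  congr 1
  field_simp

theorem IsCompactStronglyPositive.exists_contraction_of_harnackBound [Nontrivial V]
    (hA : IsCompactStronglyPositive A) (he : IsOrderUnit e) (hB : 0 < B) (Λ : ℝ) :
    ∃ γ : ℝ, 0 < γ ∧ ∀ S ∈ A, ∀ T ∈ A, ∀ u v, ∀ τ : ℝ, 0 < τ → S u ≠ 0 → HarnackBound e B u →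
      HarnackBound e B (S u) → ‖v‖ ≤ Λ * τ * ‖u‖ → S v ≤ τ • S u → ¬ 0 ≤ S v →
        T (S v) ≤ ((1 - γ) * τ) • T (S u) := by
  obtain ⟨c, hc, hlower⟩ := HarnackBound.exists_mul_norm_le hA he hB
  obtain ⟨γ, hγ, hcontr⟩ := hA.exists_contraction he hB (R := max 1 Λ / c) (by positivity)
  refine ⟨γ, hγ, fun S hS T hT u v τ hτ hSu hharnack hharnackS hv hle hSv =>
    hcontr S hS T hT u v τ hτ hSu ?_ ?_ hharnackS hle hSv⟩
  · rw [div_mul_eq_mul_div, le_div_iff₀' hc]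
    calc c * ‖u‖ ≤ ‖S u‖ := hlower S hS u hharnack
      _ ≤ max 1 Λ * ‖S u‖ := le_mul_of_one_le_left (norm_nonneg _) (le_max_left _ _)
  · rw [div_mul_eq_mul_div, le_div_iff₀' hc]
    calc c * ‖v‖ ≤ c * (Λ * τ * ‖u‖) := by gcongr
      _ = Λ * τ * (c * ‖u‖) := by ring
      _ ≤ max 1 Λ * τ * ‖S u‖ := by
        gcongr
        · exact le_max_right _ _
        · exact hlower S hS u hharnack
      _ = max 1 Λ * (τ * ‖S u‖) := mul_assoc _ _ _

theorem IsCompactStronglyPositive.exists_dominated_contraction [Nontrivial V]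
    (hA : IsCompactStronglyPositive A) (he : IsOrderUnit e) (hB : 0 < B) :
    ∃ Λ θ : ℝ, 0 < Λ ∧ 0 < θ ∧ θ < 1 ∧
      (∀ T ∈ A, ∀ u v, ∀ τ : ℝ, 0 ≤ τ → 0 ≤ u → HarnackBound e B u → Dominated Λ τ u v →
        Dominated Λ τ (T u) (T v)) ∧
      ∀ S ∈ A, ∀ T ∈ A, ∀ u v, ∀ τ : ℝ, 0 < τ → 0 ≤ u → HarnackBound e B u →
        HarnackBound e B (S u) → Dominated Λ τ u v → ¬ 0 ≤ S v → ¬ S v ≤ 0 →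
          Dominated Λ (θ * τ) (T (S u)) (T (S v)) := by
  obtain ⟨Λ, hΛ, hhalf⟩ := hA.exists_dominated_half he hB
  obtain ⟨γ, hγ, hcontr⟩ := hA.exists_contraction_of_harnackBound he hB Λ
  have hstep : ∀ T ∈ A, ∀ u v, ∀ τ : ℝ, 0 ≤ τ → 0 ≤ u → HarnackBound e B u →
      Dominated Λ τ u v → Dominated Λ τ (T u) (T v) := fun T hT u v τ hτ hu hharnack hv =>
    (hhalf T hT u v τ hτ hharnack hv).mono ((hA.stronglyPositive T hT).map_nonneg hu) le_rfl
      (by gcongr; exact half_le_self hΛ.le)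
  refine ⟨Λ, max (1 / 2) (1 - γ), hΛ, by positivity, max_lt (by norm_num) (by linarith), hstep,
    fun S hS T hT u v τ hτ hu hharnack hharnackS hv hnonneg hnonpos => ?_⟩
  have hSv := hstep S hS u v τ hτ.le hu hharnack hv
  have hSu_nonneg : 0 ≤ S u := (hA.stronglyPositive S hS).map_nonneg hu
  have hSu : S u ≠ 0 := fun h => hnonpos (by simpa only [h, smul_zero] using hSv.1.2)
  have hcontr_le : ∀ w, ‖w‖ = ‖v‖ → S w ≤ τ • S u → ¬ 0 ≤ S w →
      T (S w) ≤ (max (1 / 2) (1 - γ) * τ) • T (S u) := fun w hw hle hneg =>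
    (hcontr S hS T hT u w τ hτ hSu hharnack hharnackS (hw ▸ hv.2) hle hneg).trans <|
      smul_le_smul_of_nonneg_right (by gcongr; exact le_max_right _ _)
        ((hA.stronglyPositive T hT).map_nonneg hSu_nonneg)
  refine ⟨⟨neg_le.mp ?_, hcontr_le v rfl hSv.1.2 hnonneg⟩, ?_⟩
  · simpa only [map_neg] using hcontr_le (-v) (norm_neg v)
      (by rw [map_neg]; exact neg_le.mp hSv.1.1) (by rwa [map_neg, neg_nonneg])
  · calc ‖T (S v)‖ ≤ Λ / 2 * τ * ‖T (S u)‖ :=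
          (hhalf T hT _ _ τ hτ.le hharnackS hSv).2
      _ = Λ * (1 / 2 * τ) * ‖T (S u)‖ := by ring
      _ ≤ Λ * (max (1 / 2) (1 - γ) * τ) * ‖T (S u)‖ := by gcongr; exact le_max_left _ _

theorem IsCompactStronglyPositive.exists_exponential_separation [Nontrivial V]
    (hA : IsCompactStronglyPositive A) (he : IsOrderUnit e) :
    ∃ C θ : ℝ, 0 < C ∧ 0 < θ ∧ θ < 1 ∧ ∀ T : ℕ → V →L[ℝ] V, (∀ n, T n ∈ A) → ∀ v,
      (∀ n, ¬ 0 ≤ cocycle T n v ∧ ¬ cocycle T n v ≤ 0) → ∀ n,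
        ‖cocycle T n v‖ ≤ C * θ ^ n * ‖cocycle T n e‖ * ‖v‖ := by
  obtain ⟨B, hB, hharnack⟩ := hA.exists_harnackBound_cocycle he.pos
  obtain ⟨Λ, θ, hΛ, hθ, hθ1, hstep, hcontr⟩ := hA.exists_dominated_contraction he hB
  obtain ⟨t, ht, hinit⟩ := he.exists_dominated hΛ
  set ϑ := √θ
  have hϑ : 0 < ϑ := Real.sqrt_pos.mpr hθ
  have hϑ1 : ϑ < 1 := by rwa [Real.sqrt_lt' one_pos, one_pow]
  refine ⟨Λ * (t / ϑ), ϑ, by positivity, hϑ, hϑ1, fun T hT v hv n => ?_⟩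
  have hv₀ : 0 < ‖v‖ := norm_pos_iff.mpr fun h => (hv 0).1 h.ge
  have hu := cocycle_apply_nonneg (fun n => hA.stronglyPositive _ (hT n)) he.nonneg
  have hH := hharnack T hT
  have hdom : ∀ n, Dominated Λ (ϑ ^ n * (t / ϑ * ‖v‖)) (cocycle T n e) (cocycle T n v) := by
    refine Nat.twoStepInduction ?_ ?_ fun n ih _ => ?_
    · have hle : t * ‖v‖ ≤ ϑ ^ 0 * (t / ϑ * ‖v‖) := by
        rw [pow_zero, one_mul]
        gcongr
        exact le_div_self ht.le hϑ hϑ1.le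
      exact (hinit v).mono he.nonneg hle (by gcongr)
    · have hinit₁ := hstep _ (hT 0) e v _ (by positivity) he.nonneg (hH 0) (hinit v)
      rwa [show ϑ ^ 1 * (t / ϑ * ‖v‖) = t * ‖v‖ by field_simp]
    · rw [show ϑ ^ (n + 2) * (t / ϑ * ‖v‖) = θ * (ϑ ^ n * (t / ϑ * ‖v‖)) by
        rw [pow_add, Real.sq_sqrt hθ.le]; ring]
      exact hcontr _ (hT n) _ (hT (n + 1)) _ _ _ (by positivity) (hu n) (hH n) (hH (n + 1)) ih
        (hv (n + 1)).1 (hv (n + 1)).2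
  calc ‖cocycle T n v‖ ≤ Λ * (ϑ ^ n * (t / ϑ * ‖v‖)) * ‖cocycle T n e‖ := (hdom n).2
    _ = Λ * (t / ϑ) * ϑ ^ n * ‖cocycle T n e‖ * ‖v‖ := by ring

theorem IsCompactStronglyPositive.exists_norm_cocycle_mul_le [Nontrivial V]
    (hA : IsCompactStronglyPositive A) (he : IsOrderUnit e) :
    ∃ C : ℝ, 0 < C ∧ ∀ T : ℕ → V →L[ℝ] V, (∀ n, T n ∈ A) → ∀ k n,
      ‖cocycle T k e‖ * ‖cocycle (fun j => T (k + j)) n e‖ ≤ C * ‖cocycle T (k + n) e‖ := by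
  obtain ⟨b, hb, hbound⟩ := he.exists_le_smul_norm
  obtain ⟨B, hB, hharnack⟩ := hA.exists_harnackBound_cocycle he.pos
  refine ⟨B ^ 2 * b, by positivity, fun T hT k n => ?_⟩
  set S := cocycle (fun j => T (k + j)) n
  have hS : Monotone S := cocycle_monotone (fun j => hA.stronglyPositive _ (hT _)) n
  rw [← real_smul_le_smul_iff_of_pos_right he.pos]
  calc (‖cocycle T k e‖ * ‖S e‖) • e = ‖cocycle T k e‖ • ‖S e‖ • e := mul_smul _ _ _
    _ ≤ ‖cocycle T k e‖ • B • S e :=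
        smul_le_smul_of_nonneg_left (hharnack _ (fun j => hT _) n) (norm_nonneg _)
    _ = B • S (‖cocycle T k e‖ • e) := by rw [map_smul, smul_comm]
    _ ≤ B • S (B • cocycle T k e) := smul_le_smul_of_nonneg_left (hS (hharnack T hT k)) hB.le
    _ = B ^ 2 • cocycle T (k + n) e := by rw [map_smul, smul_smul, cocycle_add_apply, sq]
    _ ≤ B ^ 2 • (b * ‖cocycle T (k + n) e‖) • e :=
        smul_le_smul_of_nonneg_left (hbound _) (by positivity)
    _ = (B ^ 2 * b * ‖cocycle T (k + n) e‖) • e := by rw [smul_smul, ← mul_assoc]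

end ExponentialSeparation

section OperatorComparison

variable {V : Type*} [NormedAddCommGroup V] [NormedSpace ℝ V] [PartialOrder V]
  [IsOrderedAddMonoid V] [IsOrderedModule ℝ V]
  {A : Set (V →L[ℝ] V)} {L : V →L[ℝ] V} {e : V}

theorem IsCompactStronglyPositive.exists_apply_le_smul_apply [Nontrivial V]
    (hA : IsCompactStronglyPositive A) (he : IsOrderUnit e) {B σ : ℝ} (hB : 0 < B) (hσ : 1 < σ) :
    ∃ η : ℝ, 0 < η ∧ ∀ T ∈ A, ∀ S : V →L[ℝ] V, ‖S - T‖ ≤ η → ∀ w, HarnackBound e B w →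
      S w ≤ σ • T w := by
  obtain ⟨b, hb, hbound⟩ := he.exists_le_smul_norm
  obtain ⟨κ, hκ, hκe⟩ := hA.exists_smul_le_apply e (S := {e}) isCompact_singleton
    fun v hv => hv ▸ he.pos
  have hσ' : 0 < σ - 1 := sub_pos.mpr hσ
  refine ⟨(σ - 1) * κ / (B * b), by positivity, fun T hT S hST w hw => ?_⟩
  have hdiff : S w - T w ≤ (σ - 1) • T w :=
    calc S w - T w ≤ (b * ‖S w - T w‖) • e := hbound _
      _ ≤ (b * ((σ - 1) * κ / (B * b) * ‖w‖)) • e := by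
        refine smul_le_smul_of_nonneg_right ?_ he.nonneg
        gcongr
        rw [← sub_apply]
        exact (S - T).le_of_opNorm_le hST w
      _ = ((σ - 1) / B) • (κ * ‖w‖) • e := by
        rw [smul_smul]
        congr 1
        field_simp
      _ ≤ ((σ - 1) / B) • B • T w := smul_le_smul_of_nonneg_left
        (hw.smul_le_apply (hA.stronglyPositive T hT).monotone (hκe T hT e rfl)) (by positivity)
      _ = (σ - 1) • T w := by rw [smul_smul, div_mul_cancel₀ _ hB.ne']
  rw [sub_smul, one_smul] at hdiff
  exact (sub_le_sub_iff_right _).mp hdiff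

variable [OrderClosedTopology V] [CompleteSpace V]

theorem StronglyPositive.exists_norm_pow_le_mul_norm_pow_apply [Nontrivial V]
    (hL : StronglyPositive L) (hLc : IsCompactOperator L) (he : IsOrderUnit e) {μ : ℝ}
    (hμ : μ ∈ spectrum ℝ L) (hμ1 : 1 < ‖μ‖) :
    ∃ C : ℝ, 0 < C ∧ ∀ n, ‖μ‖ ^ n ≤ C * ‖(L ^ n) e‖ := by
  have hμ₀ : μ ≠ 0 := norm_pos_iff.mp (one_pos.trans hμ1)
  obtain ⟨v, hv⟩ := ((hLc.hasEigenvalue_iff_mem_spectrum hμ₀).mpr hμ).exists_hasEigenvector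
  have hv₀ : 0 < ‖v‖ := norm_pos_iff.mpr hv.2
  have hpow : ∀ n, (L ^ n) v = μ ^ n • v := fun n =>
    (LinearMap.congr_fun (L.toLinearMap_pow n) v).trans (hv.pow_apply n)
  obtain ⟨b, hb, hbound⟩ := he.exists_le_smul_norm
  obtain ⟨C, hC, hehrling⟩ := hL.isCompactStronglyPositive_singleton hLc
    |>.exists_norm_le_of_mem_Icc he.pos one_half_pos
  refine ⟨2 * (C * (b * b)), by positivity, fun n => ?_⟩
  set α := b * ‖v‖ * (b * ‖(L ^ n) e‖)
  have hle : ∀ w, ‖w‖ = ‖v‖ → (L ^ n) w ≤ α • e := fun w hw => by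
    have hmono : Monotone (L ^ n) := by
      rw [← cocycle_const]
      exact cocycle_monotone (fun _ => hL) n
    calc (L ^ n) w ≤ (L ^ n) ((b * ‖v‖) • e) := hmono (hw ▸ hbound w)
      _ = (b * ‖v‖) • (L ^ n) e := map_smul _ _ _
      _ ≤ (b * ‖v‖) • (b * ‖(L ^ n) e‖) • e :=
        smul_le_smul_of_nonneg_left (hbound _) (by positivity)
      _ = α • e := smul_smul _ _ _
  have hIcc : (L ^ n) v ∈ Icc (-(α • e)) (α • e) :=
    ⟨neg_le.mp (by simpa only [map_neg] using hle (-v) (norm_neg v)), hle v rfl⟩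
  have hpreimage : L (μ⁻¹ • (L ^ n) v) = (L ^ n) v := by
    rw [hpow, map_smul, map_smul, show L v = μ • v from hv.apply_eq_smul, smul_comm (μ ^ n) μ,
      inv_smul_smul₀ hμ₀]
  have hbound_v := hehrling L rfl (μ⁻¹ • (L ^ n) v) α (by rwa [hpreimage])
  rw [hpreimage, hpow, norm_smul, norm_smul, norm_smul, norm_pow, norm_inv] at hbound_v
  have hshrink : ‖μ‖⁻¹ * (‖μ‖ ^ n * ‖v‖) ≤ ‖μ‖ ^ n * ‖v‖ :=
    mul_le_of_le_one_left (by positivity) (inv_le_one_of_one_le₀ hμ1.le)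
  refine le_of_mul_le_mul_right ?_ hv₀
  calc ‖μ‖ ^ n * ‖v‖ ≤ 2 * (C * α) := by linarith
    _ = 2 * (C * (b * b)) * ‖(L ^ n) e‖ * ‖v‖ := by ring

theorem StronglyPositive.eventually_smul_le_pow_apply [Nontrivial V] (hL : StronglyPositive L)
    (hLc : IsCompactOperator L) (he : IsOrderUnit e) {μ : ℝ} (hμ : μ ∈ spectrum ℝ L)
    (hμ1 : 1 < ‖μ‖) (r : ℝ) : ∀ᶠ n in atTop, r • e ≤ (L ^ n) e := by
  obtain ⟨C, hC, hgrowth⟩ := hL.exists_norm_pow_le_mul_norm_pow_apply hLc he hμ hμ1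
  obtain ⟨B, hB, hharnack⟩ := (hL.isCompactStronglyPositive_singleton hLc)
    |>.exists_harnackBound_cocycle he.pos
  filter_upwards [(tendsto_pow_atTop_atTop_of_one_lt hμ1).eventually_ge_atTop (C * (B * r))]
    with n hn
  have hnorm : B * r ≤ ‖(L ^ n) e‖ := le_of_mul_le_mul_left (hn.trans (hgrowth n)) hC
  have hpow : HarnackBound e B ((L ^ n) e) := by
    simpa only [cocycle_const] using hharnack (fun _ => L) (fun _ => rfl) n
  have hle := (smul_le_smul_of_nonneg_right hnorm he.nonneg).trans hpow
  rw [mul_smul] at hle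
  exact le_of_smul_le_smul_left hle hB

end OperatorComparison

section AverageDeriv

variable {V W : Type*} [NormedAddCommGroup V] [NormedSpace ℝ V] [NormedAddCommGroup W]
  [NormedSpace ℝ W] {f : V → W} {F' : V → V →L[ℝ] W}

/-- The mean of the derivative `F'` over the segment from `y` to `z`: a linear operator, continuous
in the endpoints, that maps `z - y` to the increment of the primitive of `F'`. -/
noncomputable def averageDeriv (F' : V → V →L[ℝ] W) (y z : V) : V →L[ℝ] W :=
  ∫ s in (0 : ℝ)..1, F' (y + s • (z - y))

theorem continuous_averageDeriv (hF' : Continuous F') :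
    Continuous fun p : V × V => averageDeriv F' p.1 p.2 := by
  refine intervalIntegral.continuous_parametric_intervalIntegral_of_continuous' ?_ _ _
  fun_prop

variable [CompleteSpace W]

theorem averageDeriv_self (F' : V → V →L[ℝ] W) (y : V) : averageDeriv F' y y = F' y := by
  simp [averageDeriv]

theorem averageDeriv_apply_sub (hf : ∀ x, HasFDerivAt f (F' x) x) (hF' : Continuous F') (y z : V) :
    averageDeriv F' y z (z - y) = f z - f y := by
  have hsegment : ∀ s : ℝ, HasDerivAt (fun s : ℝ => f (y + s • (z - y)))
      (F' (y + s • (z - y)) (z - y)) s := fun s =>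
    (hf _).comp_hasDerivAt s <| by
      simpa using ((hasDerivAt_id s).smul_const (z - y)).const_add y
  have hint : IntervalIntegrable (fun s : ℝ => F' (y + s • (z - y))) volume 0 1 :=
    Continuous.intervalIntegrable (by fun_prop) _ _
  rw [averageDeriv, ContinuousLinearMap.intervalIntegral_apply hint,
    intervalIntegral.integral_eq_sub_of_hasDerivAt (fun s _ => hsegment s)
      (Continuous.intervalIntegrable (by fun_prop) _ _)]
  simp

theorem averageDeriv_mem (hF' : Continuous F') {S : Set (V →L[ℝ] W)} (hS : Convex ℝ S)
    (hSc : IsClosed S) {y z : V} (hmem : ∀ s ∈ Icc (0 : ℝ) 1, F' (y + s • (z - y)) ∈ S) :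
    averageDeriv F' y z ∈ S := by
  have : IsProbabilityMeasure (volume.restrict (Ioc (0 : ℝ) 1)) := ⟨by simp⟩
  rw [averageDeriv, intervalIntegral.integral_of_le zero_le_one]
  refine hS.integral_mem hSc ?_
    (Continuous.integrableOn_Icc (by fun_prop) |>.mono_set Ioc_subset_Icc_self)
  filter_upwards [ae_restrict_mem measurableSet_Ioc] with s hs
  exact hmem s (Ioc_subset_Icc_self hs)

theorem isCompactOperator_averageDeriv (hF' : Continuous F') (hc : ∀ x, IsCompactOperator (F' x))
    (y z : V) : IsCompactOperator (averageDeriv F' y z) :=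
  averageDeriv_mem hF' (S := (compactOperator (RingHom.id ℝ) V W : Set (V →L[ℝ] W)))
    (Submodule.convex _) isClosed_setOfPred_isCompactOperator fun _ _ => hc _

end AverageDeriv

section StronglyMonotone

variable {V : Type*} [NormedAddCommGroup V] [NormedSpace ℝ V] [PartialOrder V]

/-- `F` is a `C¹` map with derivative `F'`, and every `F' x` is compact and strongly positive. -/
structure HasStronglyPositiveDeriv (F : V → V) (F' : V → V →L[ℝ] V) : Prop where
  hasFDerivAt : ∀ x, HasFDerivAt F (F' x) x
  continuous_deriv : Continuous F'
  isCompactOperator : ∀ x, IsCompactOperator (F' x)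
  stronglyPositive : ∀ x, StronglyPositive (F' x)

variable {F : V → V} {F' : V → V →L[ℝ] V} {Q : Set V} {e : V}

theorem HasStronglyPositiveDeriv.continuous (hF : HasStronglyPositiveDeriv F F') : Continuous F :=
  continuous_iff_continuousAt.mpr fun x => (hF.hasFDerivAt x).continuousAt

variable [IsOrderedAddMonoid V] [IsOrderedModule ℝ V] [OrderClosedTopology V] [CompleteSpace V]

theorem HasStronglyPositiveDeriv.stronglyPositive_averageDeriv (hF : HasStronglyPositiveDeriv F F')
    (he : IsOrderUnit e) (y z : V) : StronglyPositive (averageDeriv F' y z) := by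
  intro v hv
  have hcont := hF.continuous_deriv
  obtain ⟨c, hc, hle⟩ := exists_pos_smul_le_of_isCompact e
    (S := (fun s : ℝ => F' (y + s • (z - y)) v) '' Icc 0 1) (isCompact_Icc.image (by fun_prop))
    (by rintro _ ⟨s, -, rfl⟩; exact hF.stronglyPositive _ v hv)
  have hmem : averageDeriv F' y z ∈ {T : V →L[ℝ] V | c • e ≤ T v} :=
    averageDeriv_mem hcont
      ((convex_Ici (c • e)).linear_preimage (ContinuousLinearMap.apply ℝ V v).toLinearMap)
      (isClosed_Ici.preimage (ContinuousLinearMap.apply ℝ V v).continuous)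
      fun s hs => hle _ ⟨s, hs, rfl⟩
  exact (he.smul hc).mono hmem

theorem HasStronglyPositiveDeriv.isCompactStronglyPositive_image_averageDeriv
    (hF : HasStronglyPositiveDeriv F F') (he : IsOrderUnit e) (hQ : IsCompact Q) :
    IsCompactStronglyPositive (image2 (averageDeriv F') Q Q) where
  isCompact := by
    rw [← image_prod]
    exact (hQ.prod hQ).image (continuous_averageDeriv hF.continuous_deriv)
  isCompactOperator := by
    rintro _ ⟨y, -, z, -, rfl⟩
    exact isCompactOperator_averageDeriv hF.continuous_deriv hF.isCompactOperator y z
  stronglyPositive := by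
    rintro _ ⟨y, -, z, -, rfl⟩
    exact hF.stronglyPositive_averageDeriv he y z

theorem HasStronglyPositiveDeriv.monotone (hF : HasStronglyPositiveDeriv F F')
    (he : IsOrderUnit e) : Monotone F := fun y z hyz => by
  have hnonneg := (hF.stronglyPositive_averageDeriv he y z).map_nonneg (sub_nonneg.mpr hyz)
  rwa [averageDeriv_apply_sub hF.hasFDerivAt hF.continuous_deriv, sub_nonneg] at hnonneg

theorem HasStronglyPositiveDeriv.exists_averageDeriv_apply_le [Nontrivial V]
    (hF : HasStronglyPositiveDeriv F F') (he : IsOrderUnit e) (hQ : IsCompact Q) {B σ : ℝ}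
    (hB : 0 < B) (hσ : 1 < σ) :
    ∃ δ : ℝ, 0 < δ ∧ ∀ y ∈ Q, ∀ z ∈ Q, ‖z - y‖ ≤ δ → ∀ w, HarnackBound e B w →
      averageDeriv F' y z w ≤ σ • F' y w := by
  obtain ⟨η, hη, hcompare⟩ := (hF.isCompactStronglyPositive_image_averageDeriv he hQ)
    |>.exists_apply_le_smul_apply he hB hσ
  obtain ⟨δ, hδ, hunif⟩ := Metric.uniformContinuousOn_iff.mp
    ((hQ.prod hQ).uniformContinuousOn_of_continuous
      (continuous_averageDeriv hF.continuous_deriv).continuousOn) η hη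
  refine ⟨δ / 2, half_pos hδ, fun y hy z hz hyz w hw => ?_⟩
  have hdist : dist (y, z) (y, y) < δ := by
    rw [dist_prod_same_left, dist_eq_norm]
    linarith
  have hclose := (hunif (y, z) ⟨hy, hz⟩ (y, y) ⟨hy, hy⟩ hdist).le
  rw [dist_eq_norm] at hclose
  simpa only [averageDeriv_self] using hcompare _ (mem_image2_of_mem hy hy) _ hclose w hw

end StronglyMonotone

section SubexponentialGrowth

/-- Growth slower than every exponential `σ ^ n` with `1 < σ`. -/
def HasSubexponentialGrowth (a : ℕ → ℝ) : Prop :=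
  ∀ σ : ℝ, 1 < σ → a =o[atTop] fun n => σ ^ n

variable {a a' : ℕ → ℝ}

theorem HasSubexponentialGrowth.of_le_mul_add (ha : HasSubexponentialGrowth a) {C : ℝ} {k : ℕ}
    (ha' : ∀ n, 0 ≤ a' n) (hle : ∀ n, a' n ≤ C * a (k + n)) : HasSubexponentialGrowth a' := by
  intro σ hσ
  have hbigO : a' =O[atTop] fun n => a (k + n) := .of_bound |C| <| .of_forall fun n => by
    rw [Real.norm_of_nonneg (ha' n), Real.norm_eq_abs, ← abs_mul]
    exact (hle n).trans (le_abs_self _)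
  have hshift : (fun n => a (k + n)) =o[atTop] fun n => σ ^ k * σ ^ n := by
    simpa only [Function.comp_def, pow_add] using
      (ha σ hσ).comp_tendsto (tendsto_atTop_mono (Nat.le_add_left · k) tendsto_id)
  exact (hbigO.trans_isLittleO hshift).of_const_mul_right

theorem frequently_forall_le_of_tendsto_zero (ha : ∀ n, 0 < a n) (hlim : Tendsto a atTop (𝓝 0)) :
    ∃ᶠ m in atTop, ∀ n, m ≤ n → a n ≤ a m := by
  refine frequently_atTop.mpr fun N => ?_
  obtain ⟨M, hM⟩ := eventually_atTop.mp (hlim.eventually_lt_const (ha N))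
  obtain ⟨m, hm, hmax⟩ := Finset.exists_max_image (Finset.Icc N (max N M)) a ⟨N, by simp⟩
  refine ⟨m, (Finset.mem_Icc.mp hm).1, fun n hn => ?_⟩
  rcases le_or_gt n (max N M) with hle | hlt
  · exact hmax n (Finset.mem_Icc.mpr ⟨(Finset.mem_Icc.mp hm).1.trans hn, hle⟩)
  · exact (hM n ((le_max_right _ _).trans hlt.le)).le.trans (hmax N (by simp))

theorem HasSubexponentialGrowth.frequently_add_le (h : HasSubexponentialGrowth a)
    (ha : ∀ n, 0 < a n) {σ : ℝ} (hσ : 1 < σ) : ∃ᶠ m in atTop, ∀ k, a (m + k) ≤ σ ^ k * a m := by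
  have hσ₀ : 0 < σ := one_pos.trans hσ
  refine (frequently_forall_le_of_tendsto_zero (fun n => div_pos (ha n) (pow_pos hσ₀ n))
    (h σ hσ).tendsto_div_nhds_zero).mono fun m hm k => ?_
  have hquot := hm (m + k) (Nat.le_add_right m k)
  rw [div_le_div_iff₀ (by positivity) (by positivity), pow_add] at hquot
  refine le_of_mul_le_mul_right ?_ (pow_pos hσ₀ m)
  linarith

end SubexponentialGrowth

section OrbitDeriv

variable {V : Type*} [NormedAddCommGroup V] [NormedSpace ℝ V]

/-- The derivatives of `F` along the orbit of `x`. By the chain rule, their products are the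
derivatives of the iterates of `F` at `x`. -/
def orbitDeriv (F : V → V) (F' : V → V →L[ℝ] V) (x : V) (n : ℕ) : V →L[ℝ] V := F' (F^[n] x)

variable {F : V → V} {F' : V → V →L[ℝ] V}

theorem orbitDeriv_iterate (F : V → V) (F' : V → V →L[ℝ] V) (k : ℕ) (x : V) :
    orbitDeriv F F' (F^[k] x) = fun n => orbitDeriv F F' x (k + n) := by
  funext n
  rw [orbitDeriv, orbitDeriv, ← iterate_add_apply, add_comm]

theorem cocycle_orbitDeriv_add_apply (F : V → V) (F' : V → V →L[ℝ] V) (x : V) (k n : ℕ) (v : V) :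
    cocycle (orbitDeriv F F' x) (k + n) v =
      cocycle (orbitDeriv F F' (F^[k] x)) n (cocycle (orbitDeriv F F' x) k v) := by
  rw [cocycle_add_apply, orbitDeriv_iterate]

theorem hasFDerivAt_iterate (hF : ∀ x, HasFDerivAt F (F' x) x) (n : ℕ) (x : V) :
    HasFDerivAt F^[n] (cocycle (orbitDeriv F F' x) n) x := by
  induction n with
  | zero => exact hasFDerivAt_id x
  | succ n ih =>
    rw [iterate_succ']
    exact (hF _).comp x ih

theorem continuous_cocycle_orbitDeriv (hF : Continuous F) (hF' : Continuous F') (n : ℕ) :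
    Continuous fun x => cocycle (orbitDeriv F F' x) n := by
  induction n with
  | zero => exact continuous_const
  | succ n ih => exact (hF'.comp (hF.iterate n)).clm_comp ih

theorem cocycle_averageDeriv_apply_sub [CompleteSpace V] (hF : ∀ x, HasFDerivAt F (F' x) x)
    (hF' : Continuous F') (y z : V) (n : ℕ) :
    cocycle (fun k => averageDeriv F' (F^[k] y) (F^[k] z)) n (z - y) = F^[n] z - F^[n] y := by
  induction n with
  | zero => rfl
  | succ n ih =>
    rw [cocycle_succ_apply, ih, averageDeriv_apply_sub hF hF', iterate_succ_apply',
      iterate_succ_apply']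

theorem cocycle_orbitDeriv_mul (F' : V → V →L[ℝ] V) {q : V} {p : ℕ}
    (hq : IsPeriodicPt F p q) (n : ℕ) :
    cocycle (orbitDeriv F F' q) (p * n) = cocycle (orbitDeriv F F' q) p ^ n := by
  induction n with
  | zero => rfl
  | succ n ih =>
    ext v
    rw [mul_add_one, cocycle_orbitDeriv_add_apply, (hq.mul_const n).eq, ih, pow_succ',
      mul_apply_eq_comp]

theorem orbitDeriv_mem_image2_averageDeriv [CompleteSpace V] (F' : V → V →L[ℝ] V)
    {Q : Set V} {x : V} (hx : ∀ n, F^[n] x ∈ Q) (n : ℕ) :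
    orbitDeriv F F' x n ∈ image2 (averageDeriv F') Q Q :=
  ⟨_, hx n, _, hx n, averageDeriv_self F' _⟩

end OrbitDeriv

section Convergence

theorem exists_tendsto_of_monotone_of_isCompact {α : Type*} [TopologicalSpace α] [PartialOrder α]
    [OrderClosedTopology α] {Q : Set α} (hQ : IsCompact Q) {s : ℕ → α} (hs : Monotone s)
    (hsQ : ∀ n, s n ∈ Q) : ∃ q, Tendsto s atTop (𝓝 q) := by
  have hle : ∀ q, MapClusterPt q atTop s → ∀ n, s n ≤ q := fun q hq n =>
    isClosed_Ici.mem_of_mapClusterPt hq ((eventually_ge_atTop n).mono fun _ h => hs h)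
  have hge : ∀ q q', MapClusterPt q atTop s → MapClusterPt q' atTop s → q ≤ q' :=
    fun q q' hq hq' => isClosed_Iic.mem_of_mapClusterPt hq (.of_forall (hle q' hq'))
  obtain ⟨q, -, hq⟩ := hQ.exists_mapClusterPt_of_frequently (l := atTop) (f := s)
    (Eventually.of_forall hsQ).frequently
  exact ⟨q, hQ.tendsto_nhds_of_unique_mapClusterPt (.of_forall hsQ) fun q' _ hq' =>
    (hge q' q hq' hq).antisymm (hge q q' hq hq')⟩

theorem exists_lt_dist_le_of_frequently {α : Type*} [PseudoMetricSpace α] {Q : Set α}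
    (hQ : IsCompact Q) {s : ℕ → α} (hsQ : ∀ n, s n ∈ Q) {P : ℕ → Prop} (hP : ∃ᶠ n in atTop, P n)
    {δ : ℝ} (hδ : 0 < δ) : ∃ m n, m < n ∧ P m ∧ dist (s n) (s m) ≤ δ := by
  obtain ⟨φ, hφ, hφP⟩ := extraction_of_frequently_atTop hP
  obtain ⟨_, -, ψ, hψ, hlim⟩ := hQ.tendsto_subseq fun n => hsQ (φ n)
  obtain ⟨N, hN⟩ := Metric.cauchySeq_iff.mp hlim.cauchySeq δ hδ
  exact ⟨φ (ψ N), φ (ψ (N + 1)), hφ (hψ N.lt_succ_self), hφP _,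
    (hN (N + 1) N.le_succ N le_rfl).le⟩

end Convergence

section LyapunovExponent

variable {V : Type*} [NormedAddCommGroup V] [NormedSpace ℝ V] {F : V → V} {F' : V → V →L[ℝ] V}
  {Q : Set V} {e x y : V}

/-- The Lyapunov exponent of `F` at `x` in the direction `e` is at most zero. When `e` is an order
unit and the derivatives are positive, this is the largest Lyapunov exponent. -/
def HasNonposLyapunovExponent (e : V) (F : V → V) (F' : V → V →L[ℝ] V) (x : V) : Prop :=
  HasSubexponentialGrowth fun n => ‖cocycle (orbitDeriv F F' x) n e‖

variable [PartialOrder V] [IsOrderedAddMonoid V] [IsOrderedModule ℝ V]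

theorem HasStronglyPositiveDeriv.norm_cocycle_orbitDeriv_pos (hF : HasStronglyPositiveDeriv F F')
    (he : 0 < e) (x : V) (n : ℕ) : 0 < ‖cocycle (orbitDeriv F F' x) n e‖ :=
  norm_pos_iff.mpr (cocycle_apply_pos (fun _ => hF.stronglyPositive _) he n).ne'

variable [Nontrivial V]

theorem HasNonposLyapunovExponent.exists_not_two_smul_le (h : HasNonposLyapunovExponent e F F' y)
    (hF : HasStronglyPositiveDeriv F F') (he : IsOrderUnit e) {N : ℕ} (hN : 0 < N) :
    ∃ i, ¬ (2 : ℝ) • e ≤ cocycle (orbitDeriv F F' (F^[N * i] y)) N e := by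
  by_contra! hle
  have hpow : ∀ i, (2 : ℝ) ^ i • e ≤ cocycle (orbitDeriv F F' y) (N * i) e := by
    intro i
    induction i with
    | zero => rw [pow_zero, one_smul, mul_zero, cocycle_zero_apply]
    | succ i ih =>
      calc (2 : ℝ) ^ (i + 1) • e = (2 : ℝ) ^ i • (2 : ℝ) • e := by rw [pow_succ, mul_smul]
        _ ≤ (2 : ℝ) ^ i • cocycle (orbitDeriv F F' (F^[N * i] y)) N e :=
          smul_le_smul_of_nonneg_left (hle i) (by positivity)
        _ = cocycle (orbitDeriv F F' (F^[N * i] y)) N ((2 : ℝ) ^ i • e) := (map_smul _ _ _).symm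
        _ ≤ cocycle (orbitDeriv F F' (F^[N * i] y)) N (cocycle (orbitDeriv F F' y) (N * i) e) :=
          cocycle_monotone (fun _ => hF.stronglyPositive _) N ih
        _ = cocycle (orbitDeriv F F' y) (N * (i + 1)) e := by
          rw [mul_add_one, cocycle_orbitDeriv_add_apply]
  obtain ⟨b, -, hbound⟩ := he.exists_le_smul_norm
  have hbigO : (fun i => (2 : ℝ) ^ i) =O[atTop]
      fun i => ‖cocycle (orbitDeriv F F' y) (N * i) e‖ := .of_bound b <| .of_forall fun i => by
    rw [norm_norm, Real.norm_of_nonneg (by positivity),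
      ← real_smul_le_smul_iff_of_pos_right he.pos]
    exact (hpow i).trans (hbound _)
  have hσ : 1 < (2 : ℝ) ^ (N⁻¹ : ℝ) := Real.one_lt_rpow one_lt_two (by positivity)
  have hlittleO := (h _ hσ).comp_tendsto (tendsto_id.const_mul_atTop' hN)
  simp only [comp_def, id, pow_mul, Real.rpow_inv_natCast_pow zero_le_two hN.ne'] at hlittleO
  exact hbigO.not_isLittleO (.of_forall fun i => by positivity) hlittleO

variable [OrderClosedTopology V] [CompleteSpace V]

theorem HasStronglyPositiveDeriv.exists_norm_cocycle_orbitDeriv_mul_le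
    (hF : HasStronglyPositiveDeriv F F') (he : IsOrderUnit e) (hQ : IsCompact Q) :
    ∃ C : ℝ, 0 < C ∧ ∀ x, (∀ n, F^[n] x ∈ Q) → ∀ k n,
      ‖cocycle (orbitDeriv F F' x) k e‖ * ‖cocycle (orbitDeriv F F' (F^[k] x)) n e‖ ≤
        C * ‖cocycle (orbitDeriv F F' x) (k + n) e‖ := by
  obtain ⟨C, hC, hle⟩ := (hF.isCompactStronglyPositive_image_averageDeriv he hQ)
    |>.exists_norm_cocycle_mul_le he
  refine ⟨C, hC, fun x hx k n => ?_⟩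
  rw [orbitDeriv_iterate]
  exact hle _ (orbitDeriv_mem_image2_averageDeriv F' hx) k n

theorem HasNonposLyapunovExponent.iterate (h : HasNonposLyapunovExponent e F F' x)
    (hF : HasStronglyPositiveDeriv F F') (he : IsOrderUnit e) (hQ : IsCompact Q)
    (hx : ∀ n, F^[n] x ∈ Q) (k : ℕ) : HasNonposLyapunovExponent e F F' (F^[k] x) := by
  obtain ⟨C, -, hle⟩ := hF.exists_norm_cocycle_orbitDeriv_mul_le he hQ
  refine HasSubexponentialGrowth.of_le_mul_add h (k := k)
    (C := C / ‖cocycle (orbitDeriv F F' x) k e‖) (fun _ => norm_nonneg _) fun n => ?_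
  rw [div_mul_eq_mul_div, le_div_iff₀' (hF.norm_cocycle_orbitDeriv_pos he.pos x k)]
  exact hle x hx k n

theorem HasStronglyPositiveDeriv.exists_frequently_norm_cocycle_le
    (hF : HasStronglyPositiveDeriv F F') (he : IsOrderUnit e) (hQ : IsCompact Q) :
    ∃ C : ℝ, 0 < C ∧ ∀ x, (∀ n, F^[n] x ∈ Q) → HasNonposLyapunovExponent e F F' x →
      ∀ σ : ℝ, 1 < σ → ∃ᶠ m in atTop, ∀ k,
        ‖cocycle (orbitDeriv F F' (F^[m] x)) k e‖ ≤ C * σ ^ k := by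
  obtain ⟨C, hC, hle⟩ := hF.exists_norm_cocycle_orbitDeriv_mul_le he hQ
  refine ⟨C, hC, fun x hx h σ hσ => ?_⟩
  have hpos := hF.norm_cocycle_orbitDeriv_pos he.pos x
  refine (h.frequently_add_le hpos hσ).mono fun m hm k => ?_
  refine le_of_mul_le_mul_left ?_ (hpos m)
  calc ‖cocycle (orbitDeriv F F' x) m e‖ * ‖cocycle (orbitDeriv F F' (F^[m] x)) k e‖
      ≤ C * ‖cocycle (orbitDeriv F F' x) (m + k) e‖ := hle x hx m k
    _ ≤ C * (σ ^ k * ‖cocycle (orbitDeriv F F' x) m e‖) := by gcongr; exact hm k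
    _ = ‖cocycle (orbitDeriv F F' x) m e‖ * (C * σ ^ k) := by ring

theorem HasStronglyPositiveDeriv.exists_norm_cocycle_averageDeriv_le
    (hF : HasStronglyPositiveDeriv F F') (he : IsOrderUnit e) (hQ : IsCompact Q) {σ : ℝ}
    (hσ : 1 < σ) :
    ∃ C δ : ℝ, 0 < C ∧ 0 < δ ∧ ∀ y z, (∀ n, F^[n] y ∈ Q) → (∀ n, F^[n] z ∈ Q) → ∀ n,
      (∀ k < n, ‖F^[k] z - F^[k] y‖ ≤ δ) →
        ‖cocycle (fun k => averageDeriv F' (F^[k] y) (F^[k] z)) n e‖ ≤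
          C * σ ^ n * ‖cocycle (orbitDeriv F F' y) n e‖ := by
  obtain ⟨b, hb, hbound⟩ := he.exists_le_smul_norm
  obtain ⟨B, hB, hharnack⟩ := (hF.isCompactStronglyPositive_image_averageDeriv he hQ)
    |>.exists_harnackBound_cocycle he.pos
  obtain ⟨δ, hδ, hcompare⟩ := hF.exists_averageDeriv_apply_le he hQ hB hσ
  refine ⟨B * b, δ, by positivity, hδ, fun y z hy hz n hclose => ?_⟩
  have hH := hharnack (fun k => averageDeriv F' (F^[k] y) (F^[k] z))
    fun k => mem_image2_of_mem (hy k) (hz k)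
  rw [← real_smul_le_smul_iff_of_pos_right he.pos]
  calc _ ≤ B • cocycle (fun k => averageDeriv F' (F^[k] y) (F^[k] z)) n e := hH n
    _ ≤ B • σ ^ n • cocycle (orbitDeriv F F' y) n e :=
      smul_le_smul_of_nonneg_left (cocycle_apply_le_pow_smul (fun _ => hF.stronglyPositive _)
        (by positivity) fun k hk => hcompare _ (hy k) _ (hz k) (hclose k hk) _ (hH k)) hB.le
    _ ≤ B • σ ^ n • (b * ‖cocycle (orbitDeriv F F' y) n e‖) • e :=
      smul_le_smul_of_nonneg_left
        (smul_le_smul_of_nonneg_left (hbound _) (by positivity)) hB.le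
    _ = _ := by rw [smul_smul, smul_smul]; congr 1; ring

theorem HasStronglyPositiveDeriv.exists_geometric_contraction
    (hF : HasStronglyPositiveDeriv F F') (he : IsOrderUnit e) (hQ : IsCompact Q) :
    ∃ σ r : ℝ, 1 < σ ∧ 0 ≤ r ∧ r < 1 ∧ ∀ C : ℝ, 0 < C → ∃ C' δ : ℝ, 0 < δ ∧
      ∀ y z, (∀ n, F^[n] y ∈ Q) → (∀ n, F^[n] z ∈ Q) →
        (∀ n, ‖cocycle (orbitDeriv F F' y) n e‖ ≤ C * σ ^ n) →
        (∀ n, ¬ F^[n] y ≤ F^[n] z ∧ ¬ F^[n] z ≤ F^[n] y) → ‖z - y‖ ≤ δ →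
          ∀ n, ‖F^[n] z - F^[n] y‖ ≤ C' * r ^ n := by
  obtain ⟨C₁, θ, hC₁, hθ, hθ1, hseparation⟩ :=
    (hF.isCompactStronglyPositive_image_averageDeriv he hQ).exists_exponential_separation he
  obtain ⟨r, hθr, hr1⟩ := exists_between hθ1
  have hr : 0 < r := hθ.trans hθr
  have hσ : 1 < √(r / θ) := by rwa [Real.lt_sqrt zero_le_one, one_pow, one_lt_div hθ]
  set σ := √(r / θ)
  have hσr : θ * σ * σ = r := by
    rw [mul_assoc, Real.mul_self_sqrt (by positivity), mul_div_cancel₀ _ hθ.ne']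
  obtain ⟨C₂, δ, hC₂, hδ, hgrowth⟩ := hF.exists_norm_cocycle_averageDeriv_le he hQ hσ
  refine ⟨σ, r, hσ, hr.le, hr1, fun C hC => ⟨δ, δ / (C₁ * C₂ * C), by positivity,
    fun y z hy hz hgrow hincomparable hyz n => ?_⟩⟩
  rw [le_div_iff₀ (by positivity)] at hyz
  induction n using Nat.strong_induction_on with
  | h n ih =>
    have hdiff := cocycle_averageDeriv_apply_sub hF.hasFDerivAt hF.continuous_deriv y z
    have hsep := hseparation (fun k => averageDeriv F' (F^[k] y) (F^[k] z))
      (fun k => mem_image2_of_mem (hy k) (hz k)) (z - y)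
      (fun n => by simpa only [hdiff, sub_nonneg, sub_nonpos] using hincomparable n) n
    have hclose : ∀ k < n, ‖F^[k] z - F^[k] y‖ ≤ δ := fun k hk =>
      (ih k hk).trans (mul_le_of_le_one_right hδ.le (pow_le_one₀ hr.le hr1.le))
    rw [hdiff] at hsep
    calc ‖F^[n] z - F^[n] y‖ ≤ _ := hsep
      _ ≤ C₁ * θ ^ n * (C₂ * σ ^ n * (C * σ ^ n)) * ‖z - y‖ := by
        gcongr
        exact (hgrowth y z hy hz n hclose).trans (by gcongr; exact hgrow n)
      _ = ‖z - y‖ * (C₁ * C₂ * C) * (θ * σ * σ) ^ n := by rw [mul_pow, mul_pow]; ring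
      _ ≤ δ * r ^ n := by rw [hσr]; gcongr

end LyapunovExponent

section OmegaLimit

variable {V : Type*} {F : V → V} {x q : V}

theorem semiOrbit_iterate_subset (F : V → V) (m : ℕ) (x : V) :
    semiOrbit F (F^[m] x) ⊆ semiOrbit F x := by
  rintro _ ⟨n, rfl⟩
  exact ⟨n + m, (iterate_add_apply F n m x).symm⟩

theorem finite_semiOrbit_of_isPeriodicPt {p : ℕ} (hp : 0 < p) (hq : IsPeriodicPt F p q) :
    (semiOrbit F q).Finite := by
  refine ((finite_Iio p).image fun n => F^[n] q).subset ?_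
  rintro _ ⟨n, rfl⟩
  exact ⟨n % p, Nat.mod_lt n hp, hq.iterate_mod_apply n⟩

theorem isMinPeriodicPt_minimalPeriod {p : ℕ} (hp : 0 < p) (hq : IsPeriodicPt F p q) :
    IsMinPeriodicPt F (minimalPeriod F q) q :=
  ⟨hq.minimalPeriod_pos hp, isPeriodicPt_minimalPeriod F q, fun _ hl hlt =>
    not_isPeriodicPt_of_pos_of_lt_minimalPeriod (Nat.one_le_iff_ne_zero.mp hl) hlt⟩

variable [NormedAddCommGroup V]

theorem omegaSet_iterate (F : V → V) (m : ℕ) (x : V) : omegaSet F (F^[m] x) = omegaSet F x := by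
  refine Subset.antisymm (iInter_mono fun k => closure_mono ?_)
    (subset_iInter fun k => (iInter_subset _ (k + m)).trans_eq ?_)
  · rw [← iterate_add_apply, add_comm, iterate_add_apply]
    exact semiOrbit_iterate_subset F m _
  · rw [iterate_add_apply]

theorem eventually_iterate_mem_of_tendsto (hF : Continuous F) {p : ℕ} (hp : 0 < p)
    (hlim : Tendsto (fun j => (F^[p])^[j] x) atTop (𝓝 q)) {U : Set V} (hU : IsOpen U)
    (hqU : semiOrbit F q ⊆ U) : ∀ᶠ n in atTop, F^[n] x ∈ U := by
  have hresidue : ∀ᶠ j in atTop, ∀ i < p, F^[i] ((F^[p])^[j] x) ∈ U :=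
    (eventually_all_finite (finite_Iio p)).mpr fun i _ =>
      (((hF.iterate i).tendsto q).comp hlim).eventually (hU.mem_nhds (hqU ⟨i, rfl⟩))
  filter_upwards [(Nat.tendsto_div_const_atTop hp.ne').eventually hresidue] with n hn
  have hmem := hn (n % p) (Nat.mod_lt n hp)
  rwa [← iterate_mul, ← iterate_add_apply, Nat.mod_add_div] at hmem

theorem omegaSet_eq_semiOrbit_of_tendsto (hF : Continuous F) {p : ℕ} (hp : 0 < p)
    (hlim : Tendsto (fun j => (F^[p])^[j] x) atTop (𝓝 q)) : omegaSet F x = semiOrbit F q := by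
  have hq : IsPeriodicPt F p q := isFixedPt_of_tendsto_iterate hlim (hF.iterate p).continuousAt
  refine Subset.antisymm (fun y hy => ?_) ?_
  · by_contra hyq
    obtain ⟨U, W, hU, hW, hqU, hyW, hUW⟩ :=
      (finite_semiOrbit_of_isPeriodicPt hp hq).isCompact.separation_of_notMem hyq
    obtain ⟨N, hN⟩ := eventually_atTop.mp (eventually_iterate_mem_of_tendsto hF hp hlim hU hqU)
    obtain ⟨_, hW', n, rfl⟩ := mem_closure_iff.mp (mem_iInter.mp hy N) W hW hyW
    rw [← iterate_add_apply] at hW'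
    exact disjoint_left.mp hUW (hN _ (Nat.le_add_left N n)) hW'
  · rintro _ ⟨l, rfl⟩
    refine mem_iInter.mpr fun k =>
      mem_closure_of_tendsto (((hF.iterate l).tendsto q).comp hlim) ?_
    filter_upwards [eventually_ge_atTop k] with j hj
    have hk : k ≤ l + p * j := (hj.trans (Nat.le_mul_of_pos_left j hp)).trans (Nat.le_add_left _ l)
    refine ⟨l + p * j - k, ?_⟩
    rw [← iterate_add_apply, Nat.sub_add_cancel hk, iterate_add_apply, iterate_mul, comp_apply]

end OmegaLimit

section IterateConvergence

theorem exists_tendsto_iterate_of_monotone {α : Type*} [TopologicalSpace α] [PartialOrder α]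
    [OrderClosedTopology α] {G : α → α} (hG : Monotone G) {Q : Set α} (hQ : IsCompact Q) {y : α}
    (hy : ∀ n, G^[n] y ∈ Q) (hcomparable : y ≤ G y ∨ G y ≤ y) :
    ∃ q, Tendsto (fun n => G^[n] y) atTop (𝓝 q) := by
  rcases hcomparable with hle | hge
  · exact exists_tendsto_of_monotone_of_isCompact hQ (hG.monotone_iterate_of_le_map hle) hy
  · exact exists_tendsto_of_monotone_of_isCompact (α := αᵒᵈ) hQ
      (hG.antitone_iterate_of_map_le hge).dual_right hy

theorem exists_tendsto_iterate_of_norm_sub_le {V : Type*} [NormedAddCommGroup V] [CompleteSpace V]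
    {F : V → V} {y : V} {p : ℕ} (hp : 0 < p) {C r : ℝ} (hr : 0 ≤ r) (hr1 : r < 1)
    (hle : ∀ n, ‖F^[n] (F^[p] y) - F^[n] y‖ ≤ C * r ^ n) :
    ∃ q, Tendsto (fun j => (F^[p])^[j] y) atTop (𝓝 q) := by
  refine cauchySeq_tendsto_of_complete <|
    cauchySeq_of_le_geometric (r ^ p) C (pow_lt_one₀ hr hr1 hp.ne') fun j => ?_
  rw [dist_comm, dist_eq_norm, ← pow_mul, iterate_succ_apply, ← iterate_mul]
  exact hle (p * j)

variable {V : Type*} [NormedAddCommGroup V] [NormedSpace ℝ V] [PartialOrder V]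
  [IsOrderedAddMonoid V] [IsOrderedModule ℝ V] [OrderClosedTopology V] [CompleteSpace V]
  [Nontrivial V] {F : V → V} {F' : V → V →L[ℝ] V} {Q : Set V} {e x y q : V}

theorem HasNonposLyapunovExponent.exists_tendsto_iterate (h : HasNonposLyapunovExponent e F F' x)
    (hF : HasStronglyPositiveDeriv F F') (he : IsOrderUnit e) (hQ : IsCompact Q)
    (hx : ∀ n, F^[n] x ∈ Q) :
    ∃ m p q, 0 < p ∧ Tendsto (fun j => (F^[p])^[j] (F^[m] x)) atTop (𝓝 q) := by
  obtain ⟨σ, r, hσ, hr, hr1, hcontraction⟩ := hF.exists_geometric_contraction he hQ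
  obtain ⟨C, hC, hfrequently⟩ := hF.exists_frequently_norm_cocycle_le he hQ
  obtain ⟨C', δ, hδ, hcontr⟩ := hcontraction C hC
  obtain ⟨m, n, hmn, hgrow, hclose⟩ :=
    exists_lt_dist_le_of_frequently hQ hx (hfrequently x hx h σ hσ) hδ
  have hmQ : ∀ k, F^[k] (F^[m] x) ∈ Q := fun k => iterate_add_apply F k m x ▸ hx _
  obtain ⟨p, hp, rfl⟩ : ∃ p, 0 < p ∧ p + m = n := ⟨n - m, by omega, by omega⟩
  rw [iterate_add_apply, dist_eq_norm] at hclose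
  by_cases hincomparable : ∀ k, ¬ F^[k] (F^[m] x) ≤ F^[k] (F^[p] (F^[m] x)) ∧
      ¬ F^[k] (F^[p] (F^[m] x)) ≤ F^[k] (F^[m] x)
  · have hpQ : ∀ k, F^[k] (F^[p] (F^[m] x)) ∈ Q := fun k => iterate_add_apply F k p _ ▸ hmQ _
    obtain ⟨q, hq⟩ := exists_tendsto_iterate_of_norm_sub_le hp hr hr1
      (hcontr _ _ hmQ hpQ hgrow hincomparable hclose)
    exact ⟨m, p, q, hp, hq⟩
  · obtain ⟨k, hk⟩ := not_forall.mp hincomparable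
    rw [← not_or, not_not, (Commute.iterate_iterate_self F k p).eq (F^[m] x),
      ← iterate_add_apply] at hk
    have hkQ : ∀ j, (F^[p])^[j] (F^[k + m] x) ∈ Q := fun j => by
      rw [← iterate_mul, ← iterate_add_apply]
      exact hx _
    obtain ⟨q, hq⟩ := exists_tendsto_iterate_of_monotone ((hF.monotone he).iterate p) hQ hkQ hk
    exact ⟨k + m, p, q, hp, hq⟩

theorem HasStronglyPositiveDeriv.spectralRadius_cocycle_le_one
    (hF : HasStronglyPositiveDeriv F F') (he : IsOrderUnit e) {p p' : ℕ} (hp : 0 < p)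
    (hp' : 0 < p') (hq : IsPeriodicPt F p' q)
    (hlim : Tendsto (fun j => (F^[p])^[j] y) atTop (𝓝 q))
    (h : ∀ n, HasNonposLyapunovExponent e F F' (F^[n] y)) :
    spectralRadius ℝ (cocycle (orbitDeriv F F' q) p') ≤ 1 := by
  refine iSup₂_le fun μ hμ => le_of_not_gt fun hμ1 => ?_
  have hμ1 : 1 < ‖μ‖ := by exact_mod_cast hμ1
  have hpos : StronglyPositive (cocycle (orbitDeriv F F' q) p') :=
    stronglyPositive_cocycle (fun _ => hF.stronglyPositive _) hp'
  have hgrowth := hpos.eventually_smul_le_pow_apply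
    (isCompactOperator_cocycle (fun _ => hF.isCompactOperator _) hp') he hμ hμ1 3
  obtain ⟨s, hs, hs₀⟩ := (((tendsto_id.const_mul_atTop' hp).eventually hgrowth).and
    (eventually_gt_atTop 0)).exists
  rw [← cocycle_orbitDeriv_mul F' hq] at hs
  set N := p' * (p * id s) with hN
  have hN₀ : 0 < N := by positivity
  have hunit : IsOrderUnit (cocycle (orbitDeriv F F' q) N e - (2 : ℝ) • e) := he.mono <| by
    rw [le_sub_iff_add_le]
    calc e + (2 : ℝ) • e = (3 : ℝ) • e := by module
      _ ≤ _ := hs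
  have hcont : Continuous fun z => cocycle (orbitDeriv F F' z) N e - (2 : ℝ) • e :=
    ((continuous_cocycle_orbitDeriv hF.continuous hF.continuous_deriv N).clm_apply
      continuous_const).sub continuous_const
  obtain ⟨J, hJ⟩ := eventually_atTop.mp
    ((hcont.tendsto q).comp hlim |>.eventually (isOpen_interior.mem_nhds hunit))
  obtain ⟨i, hi⟩ := (h (p * J)).exists_not_two_smul_le hF he hN₀
  refine hi (sub_nonneg.mp ?_)
  have hnonneg := IsOrderUnit.nonneg (hJ (J + p' * s * i) (Nat.le_add_right _ _))
  rwa [comp_apply, ← iterate_mul, show p * (J + p' * s * i) = N * i + p * J by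
    rw [hN, id]; ring, iterate_add_apply] at hnonneg

theorem HasNonposLyapunovExponent.isLinearlyStableCycle (h : HasNonposLyapunovExponent e F F' x)
    (hF : HasStronglyPositiveDeriv F F') (he : IsOrderUnit e)
    (hx : IsCompact (closure (semiOrbit F x))) : IsLinearlyStableCycle F (omegaSet F x) := by
  have hxQ : ∀ n, F^[n] x ∈ closure (semiOrbit F x) := fun n => subset_closure ⟨n, rfl⟩
  obtain ⟨m, p, q, hp, hlim⟩ := h.exists_tendsto_iterate hF he hx hxQ
  have hq : IsPeriodicPt F p q :=
    isFixedPt_of_tendsto_iterate hlim (hF.continuous.iterate p).continuousAt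
  have hmin := isMinPeriodicPt_minimalPeriod hp hq
  refine ⟨q, _, hmin, ?_, ?_⟩
  · rw [← omegaSet_iterate F m x, omegaSet_eq_semiOrbit_of_tendsto hF.continuous hp hlim]
  · rintro _ ⟨l, rfl⟩
    refine ⟨_, hasFDerivAt_iterate hF.hasFDerivAt _ _,
      hF.spectralRadius_cocycle_le_one he (y := F^[l] (F^[m] x)) hp hmin.1
        ((isPeriodicPt_minimalPeriod F q).apply_iterate l) ?_ fun n => ?_⟩
    · refine (((hF.continuous.iterate l).tendsto q).comp hlim).congr fun j => ?_
      rw [comp_apply, ← iterate_mul, (Commute.iterate_iterate_self F l (p * j)).eq]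
    · rw [← iterate_add_apply, ← iterate_add_apply]
      exact h.iterate hF he hx hxQ _

end IterateConvergence

section Shy

variable {V : Type*} [NormedAddCommGroup V] [MeasurableSpace V] [BorelSpace V]

theorem isShy_empty : IsShy (∅ : Set V) :=
  ⟨∅, Subset.rfl, .empty, .dirac 0, NeZero.ne _,
    ⟨{0}, isCompact_singleton, by simp⟩, fun x => by simp⟩

variable [NormedSpace ℝ V]

theorem isShyBorel_of_ae_smul_sub_notMem {W : Set V} (hW : MeasurableSet W) (e : V)
    (h : ∀ x, ∀ᵐ t : ℝ, t • e - x ∉ W) : IsShyBorel W := by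
  have hline : Continuous fun t : ℝ => t • e := by fun_prop
  have hQ : IsCompact ((fun t : ℝ => t • e) '' Icc 0 1) := isCompact_Icc.image hline
  refine ⟨hW, (volume.restrict (Icc (0 : ℝ) 1)).map fun t => t • e, ?_, ⟨_, hQ, ?_⟩, fun x => ?_⟩
  · rw [Ne, Measure.map_eq_zero_iff hline.aemeasurable, Measure.restrict_eq_zero]
    simp
  · rw [Measure.map_apply hline.measurable hQ.measurableSet.compl]
    exact (ae_restrict_mem measurableSet_Icc).mono fun t => mem_image_of_mem _
  · rw [Measure.map_apply hline.measurable (hW.preimage (measurable_sub_const x))]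
    have hnull : volume {t : ℝ | t • e - x ∈ W} = 0 := by
      simpa only [ae_iff, not_not] using h x
    exact Measure.absolutelyContinuous_of_le Measure.restrict_le_self hnull

end Shy

section GrowthSeries

theorem ae_tsum_mul_ne_top_of_lintegral_le {α : Type*} [MeasurableSpace α] {μ : Measure α}
    {f : ℕ → α → ENNReal} (hf : ∀ n, AEMeasurable (f n) μ) {w : ℕ → ENNReal}
    (hw : ∑' n, w n ≠ ⊤) {C : ENNReal} (hC : C ≠ ⊤) (hle : ∀ n, ∫⁻ x, f n x ∂μ ≤ C) :
    ∀ᵐ x ∂μ, ∑' n, w n * f n x ≠ ⊤ := by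
  have hmeas : ∀ n, AEMeasurable (fun x => w n * f n x) μ := fun n => (hf n).const_mul _
  refine (ae_lt_top' (.tsum hmeas) (ne_top_of_le_ne_top (ENNReal.mul_ne_top hw hC) ?_)).mono
    fun _ => LT.lt.ne
  calc ∫⁻ x, ∑' n, w n * f n x ∂μ = ∑' n, w n * ∫⁻ x, f n x ∂μ := by
        rw [lintegral_tsum hmeas]
        exact tsum_congr fun n => lintegral_const_mul'' _ (hf n)
    _ ≤ ∑' n, w n * C := ENNReal.tsum_le_tsum fun n => by gcongr; exact hle n
    _ = (∑' n, w n) * C := ENNReal.tsum_mul_right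

variable {V : Type*} [NormedAddCommGroup V] [NormedSpace ℝ V] {φ : V →L[ℝ] ℝ} {e : V}
  {F : V → V} {F' : V → V →L[ℝ] V}

/-- A weighted sum of the derivatives of the iterates of `F` at `x` in the direction `e`, seen
through the functional `φ`. The weights are summable, but decay only polynomially. -/
noncomputable def growthSeries (φ : V →L[ℝ] ℝ) (e : V) (F : V → V) (F' : V → V →L[ℝ] V) (x : V) :
    ENNReal :=
  ∑' n : ℕ, ENNReal.ofReal (1 / ((n : ℝ) + 1) ^ 2) *
    ENNReal.ofReal (φ (cocycle (orbitDeriv F F' x) n e))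

theorem continuous_apply_cocycle_orbitDeriv (φ : V →L[ℝ] ℝ) (e : V) (hF : Continuous F)
    (hF' : Continuous F') (n : ℕ) : Continuous fun x => φ (cocycle (orbitDeriv F F' x) n e) :=
  φ.continuous.comp ((continuous_cocycle_orbitDeriv hF hF' n).clm_apply continuous_const)

theorem measurable_growthSeries [MeasurableSpace V] [BorelSpace V] (φ : V →L[ℝ] ℝ) (e : V)
    (hF : Continuous F) (hF' : Continuous F') : Measurable (growthSeries φ e F F') :=
  .tsum fun n =>
    (continuous_apply_cocycle_orbitDeriv φ e hF hF' n).measurable.ennreal_ofReal.const_mul _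

theorem lintegral_apply_cocycle_orbitDeriv (hF : ∀ x, HasFDerivAt F (F' x) x)
    (hF' : Continuous F') (hpos : ∀ n x, 0 ≤ φ (cocycle (orbitDeriv F F' x) n e)) (x : V)
    {a b : ℝ} (hab : a ≤ b) (n : ℕ) :
    ∫⁻ t in Ioc a b, ENNReal.ofReal (φ (cocycle (orbitDeriv F F' (t • e - x)) n e)) =
      ENNReal.ofReal (φ (F^[n] (b • e - x)) - φ (F^[n] (a • e - x))) := by
  have hFc : Continuous F := continuous_iff_continuousAt.mpr fun x => (hF x).continuousAt
  have hcont : Continuous fun t : ℝ => φ (cocycle (orbitDeriv F F' (t • e - x)) n e) :=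
    (continuous_apply_cocycle_orbitDeriv φ e hFc hF' n).comp (by fun_prop)
  have hderiv : ∀ t : ℝ, HasDerivAt (fun t : ℝ => φ (F^[n] (t • e - x)))
      (φ (cocycle (orbitDeriv F F' (t • e - x)) n e)) t := fun t =>
    φ.hasFDerivAt.comp_hasDerivAt t <| (hasFDerivAt_iterate hF n _).comp_hasDerivAt t <| by
      simpa using ((hasDerivAt_id t).smul_const e).sub_const x
  rw [← ofReal_integral_eq_lintegral_ofReal hcont.integrableOn_Ioc (.of_forall fun t => hpos n _),
    ← intervalIntegral.integral_of_le hab,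
    intervalIntegral.integral_eq_sub_of_hasDerivAt (fun t _ => hderiv t)
      (hcont.intervalIntegrable a b)]

theorem ae_growthSeries_ne_top_of_mem_Ioc (hF : ∀ x, HasFDerivAt F (F' x) x)
    (hF' : Continuous F') (hpos : ∀ n x, 0 ≤ φ (cocycle (orbitDeriv F F' x) n e)) (x : V)
    {a b : ℝ} (hab : a ≤ b) (ha : Bornology.IsBounded (semiOrbit F (a • e - x)))
    (hb : Bornology.IsBounded (semiOrbit F (b • e - x))) :
    ∀ᵐ t, t ∈ Ioc a b → growthSeries φ e F F' (t • e - x) ≠ ⊤ := by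
  have hFc : Continuous F := continuous_iff_continuousAt.mpr fun x => (hF x).continuousAt
  obtain ⟨R, hR⟩ := (ha.union hb).exists_norm_le
  have hsum : Summable fun n : ℕ => 1 / ((n : ℝ) + 1) ^ 2 := by
    exact_mod_cast (summable_nat_add_iff 1).mpr (Real.summable_one_div_nat_pow.mpr one_lt_two)
  rw [← ae_restrict_iff' measurableSet_Ioc]
  refine ae_tsum_mul_ne_top_of_lintegral_le (C := ENNReal.ofReal (‖φ‖ * R + ‖φ‖ * R)) (fun n => ?_)
    hsum.tsum_ofReal_ne_top ENNReal.ofReal_ne_top fun n => ?_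
  · exact ((continuous_apply_cocycle_orbitDeriv φ e hFc hF' n).comp (by fun_prop :
      Continuous fun t : ℝ => t • e - x)).measurable.ennreal_ofReal.aemeasurable
  · rw [lintegral_apply_cocycle_orbitDeriv hF hF' hpos x hab]
    refine ENNReal.ofReal_le_ofReal ((le_abs_self _).trans ((abs_sub _ _).trans ?_))
    exact add_le_add (φ.le_opNorm_of_le (hR _ (.inr ⟨n, rfl⟩)))
      (φ.le_opNorm_of_le (hR _ (.inl ⟨n, rfl⟩)))

theorem isShyBorel_growthSeries_eq_top [MeasurableSpace V] [BorelSpace V]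
    (hF : ∀ x, HasFDerivAt F (F' x) x) (hF' : Continuous F')
    (hpos : ∀ n x, 0 ≤ φ (cocycle (orbitDeriv F F' x) n e)) {X : Set V} (hX : IsOpen X)
    (hbdd : ∀ x ∈ X, Bornology.IsBounded (semiOrbit F x)) :
    IsShyBorel {x ∈ X | growthSeries φ e F F' x = ⊤} := by
  have hFc : Continuous F := continuous_iff_continuousAt.mpr fun x => (hF x).continuousAt
  refine isShyBorel_of_ae_smul_sub_notMem (hX.measurableSet.inter
    (measurable_growthSeries φ e hFc hF' (measurableSet_singleton ⊤))) e fun x => ?_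
  refine measure_null_of_locally_null _ fun t ht => ?_
  obtain ⟨htX, -⟩ := not_not.mp ht
  obtain ⟨r, hr, hball⟩ := Metric.nhds_basis_closedBall.mem_iff.mp
    ((hX.preimage (by fun_prop : Continuous fun t : ℝ => t • e - x)).mem_nhds htX)
  rw [Real.closedBall_eq_Icc] at hball
  have hnull := ae_growthSeries_ne_top_of_mem_Ioc hF hF' hpos x (a := t - r) (b := t + r)
    (by linarith) (hbdd _ (hball (left_mem_Icc.mpr (by linarith))))
    (hbdd _ (hball (right_mem_Icc.mpr (by linarith))))
  refine ⟨_, ?_, hnull⟩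
  filter_upwards [self_mem_nhdsWithin, mem_nhdsWithin_of_mem_nhds
    (Ioc_mem_nhds (sub_lt_self t hr) (lt_add_of_pos_right t hr))] with s hs hsIoc
  exact fun h => h hsIoc (not_not.mp hs).2

variable [PartialOrder V] [IsOrderedAddMonoid V] [IsOrderedModule ℝ V] [OrderClosedTopology V]
  [CompleteSpace V] [Nontrivial V]

theorem hasNonposLyapunovExponent_of_growthSeries_ne_top (hF : HasStronglyPositiveDeriv F F')
    (he : IsOrderUnit e) (hφe : 0 < φ e) (hφ : ∀ v, 0 ≤ v → 0 ≤ φ v) {x : V}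
    (hx : IsCompact (closure (semiOrbit F x))) (hfin : growthSeries φ e F F' x ≠ ⊤) :
    HasNonposLyapunovExponent e F F' x := by
  obtain ⟨B, hB, hharnack⟩ := (hF.isCompactStronglyPositive_image_averageDeriv he hx)
    |>.exists_harnackBound_cocycle he.pos
  have hH := hharnack _ (orbitDeriv_mem_image2_averageDeriv F' fun n => subset_closure ⟨n, rfl⟩)
  set S := (growthSeries φ e F F' x).toReal
  have hnonneg : ∀ n, 0 ≤ φ (cocycle (orbitDeriv F F' x) n e) := fun n =>
    hφ _ (cocycle_apply_nonneg (fun _ => hF.stronglyPositive _) he.nonneg n)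
  have hterm : ∀ n : ℕ, φ (cocycle (orbitDeriv F F' x) n e) ≤ S * ((n : ℝ) + 1) ^ 2 := fun n => by
    have hle := ENNReal.toReal_mono hfin (ENNReal.le_tsum n)
    rw [ENNReal.toReal_mul, ENNReal.toReal_ofReal (by positivity),
      ENNReal.toReal_ofReal (hnonneg n), one_div_mul_eq_div, div_le_iff₀ (by positivity)] at hle
    exact hle
  have hnorm : ∀ n : ℕ, ‖cocycle (orbitDeriv F F' x) n e‖ ≤ B / φ e * S * ((n : ℝ) + 1) ^ 2 :=
    fun n => by
      have hle := hφ _ (sub_nonneg.mpr (hH n))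
      rw [map_sub, map_smul, map_smul, smul_eq_mul, smul_eq_mul, sub_nonneg] at hle
      rw [div_mul_eq_mul_div, div_mul_eq_mul_div, le_div_iff₀ hφe, mul_assoc B]
      exact hle.trans (by gcongr; exact hterm n)
  have hpoly : HasSubexponentialGrowth fun n : ℕ => (n : ℝ) ^ 2 := fun σ hσ =>
    isLittleO_pow_const_const_pow_of_one_lt 2 hσ
  refine .of_le_mul_add hpoly (k := 1) (C := B / φ e * S) (fun _ => norm_nonneg _) fun n => ?_
  simpa [add_comm] using hnorm n

theorem prevalentIn_isLinearlyStableCycle [MeasurableSpace V] [BorelSpace V]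
    (hF : HasStronglyPositiveDeriv F F') (he : IsOrderUnit e) {X : Set V} (hX : IsOpen X)
    (hcpt : ∀ x ∈ X, IsCompact (closure (semiOrbit F x))) :
    PrevalentIn {x ∈ X | IsLinearlyStableCycle F (omegaSet F x)} X := by
  obtain ⟨φ, hφe, hφ⟩ := he.exists_positive_functional
  refine ⟨{x ∈ X | growthSeries φ e F F' x = ⊤}, fun x ⟨hxX, hx⟩ => ⟨hxX, ?_⟩,
    isShyBorel_growthSeries_eq_top hF.hasFDerivAt hF.continuous_deriv
      (fun n x => hφ _ (cocycle_apply_nonneg (fun _ => hF.stronglyPositive _) he.nonneg n))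
      hX fun x hx => (hcpt x hx).isBounded.subset subset_closure⟩
  by_contra hfin
  exact hx ⟨hxX, hasNonposLyapunovExponent_of_growthSeries_ne_top hF he hφe hφ (hcpt x hxX) hfin
    |>.isLinearlyStableCycle hF he (hcpt x hxX)⟩

end GrowthSeries

section ConeOrder

variable {V : Type*} [NormedAddCommGroup V] [NormedSpace ℝ V] {K : Set V}

theorem IsConeOrder.zero_mem (hK : IsConeOrder K) : (0 : V) ∈ K :=
  (hK.2.2.2.2.ge rfl).1

/-- The cone `K` of `IsConeOrder K`, bundled so as to use the order that Mathlib puts on the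
ambient space of a pointed salient cone. -/
def IsConeOrder.toConvexCone (hK : IsConeOrder K) : ConvexCone ℝ V where
  carrier := K
  smul_mem' c hc v hv := hK.2.2.1 v hv c hc
  add_mem' v hv w hw := hK.2.2.2.1 v hv w hw

theorem IsConeOrder.salient (hK : IsConeOrder K) : hK.toConvexCone.Salient :=
  fun _ hv hv0 hneg => hv0 (hK.2.2.2.2.le ⟨hv, hneg⟩)

/-- The partial order `coneLE K`. -/
abbrev IsConeOrder.partialOrder (hK : IsConeOrder K) : PartialOrder V :=
  hK.toConvexCone.toPartialOrder hK.zero_mem hK.salient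

theorem IsConeOrder.isOrderedAddMonoid (hK : IsConeOrder K) :
    letI := hK.partialOrder
    IsOrderedAddMonoid V :=
  hK.toConvexCone.to_isOrderedAddMonoid hK.zero_mem hK.salient

theorem IsConeOrder.Ici_zero (hK : IsConeOrder K) :
    letI := hK.partialOrder
    Ici (0 : V) = K :=
  Set.ext fun v => show v - 0 ∈ K ↔ v ∈ K by rw [sub_zero]

theorem IsConeOrder.isOrderedModule (hK : IsConeOrder K) :
    letI := hK.partialOrder
    IsOrderedModule ℝ V := by
  let := hK.partialOrder
  have := hK.isOrderedAddMonoid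
  refine .of_smul_nonneg fun c hc v hv => ?_
  rw [← mem_Ici, hK.Ici_zero] at hv ⊢
  rcases hc.eq_or_lt with rfl | hc
  · rw [zero_smul]
    exact hK.zero_mem
  · exact hK.2.2.1 v hv c hc

theorem IsConeOrder.orderClosedTopology (hK : IsConeOrder K) :
    letI := hK.partialOrder
    OrderClosedTopology V :=
  letI := hK.partialOrder
  ⟨hK.1.preimage (continuous_snd.sub continuous_fst)⟩

theorem isLinearlyStableCycle_of_subsingleton [Subsingleton V] (F : V → V) (x : V) :
    IsLinearlyStableCycle F (omegaSet F x) := by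
  refine ⟨x, 1, ⟨le_rfl, Subsingleton.elim _ _, by lia⟩, ?_, fun z _ => ⟨0, ?_, ?_⟩⟩
  · exact Subset.antisymm (fun y _ => ⟨0, Subsingleton.elim _ _⟩)
      (fun y _ => mem_iInter.mpr fun k => subset_closure ⟨0, Subsingleton.elim _ _⟩)
  · exact hasFDerivAt_of_subsingleton _ _
  · exact iSup₂_le fun k hk => absurd (isUnit_of_subsingleton _) hk

end ConeOrder

theorem theoremA_general [CompleteSpace E] (K : Set E) (F : E → E) (X : Set E)
    (hK : IsConeOrder K) (hKint : (interior K).Nonempty) (hXopen : IsOpen X)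
    (hcpt : ∀ x ∈ X, IsCompact (closure (semiOrbit F x))) (hH3 : SmoothStronglyPositive K F) :
    PrevalentIn {x ∈ X | IsLinearlyStableCycle F (omegaSet F x)} X := by
  rcases subsingleton_or_nontrivial E with hE | hE
  · have hall : X \ {x ∈ X | IsLinearlyStableCycle F (omegaSet F x)} = ∅ :=
      sdiff_eq_empty.mpr fun x hx => ⟨hx, isLinearlyStableCycle_of_subsingleton F x⟩
    rw [PrevalentIn, hall]
    exact isShy_empty
  let := hK.partialOrder
  have := hK.isOrderedAddMonoid
  have := hK.isOrderedModule
  have := hK.orderClosedTopology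
  obtain ⟨e, he⟩ := hKint
  obtain ⟨F', hF'c, hF', hcompact, hpos⟩ := hH3
  have hunit : ∀ v : E, IsOrderUnit v ↔ v ∈ interior K := fun v => by
    rw [IsOrderUnit, hK.Ici_zero]
  have hF : HasStronglyPositiveDeriv F F' :=
    { hasFDerivAt := hF'
      continuous_deriv := hF'c
      isCompactOperator := hcompact
      stronglyPositive := fun x v hv => (hunit _).mpr <| by
        simpa only [coneLL, sub_zero] using hpos x v ⟨hv.le, hv.ne⟩ }
  exact prevalentIn_isLinearlyStableCycle hF ((hunit e).mpr he) hXopen hcpt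

/-- Theorem A: under (H1)–(H3), the set of `x ∈ X` whose ω-limit set is a linearly
stable cycle is prevalent in `X`. -/
theorem theoremA [CompleteSpace E] [TopologicalSpace.SeparableSpace E]
    (K : Set E) (F : E → E) (X : Set E)
    -- (H1)
    (hK : IsConeOrder K) (hKint : (interior K).Nonempty)
    (hFc : Continuous F) (hFm : StronglyMonotoneMap K F)
    -- (H2)
    (hXopen : IsOpen X) (hXoc : OrderConvexSet K X) (hXinv : Set.MapsTo F X X)
    (hωc : OmegaCompactIntervals K F X)
    -- (H3)
    (hH3 : SmoothStronglyPositive K F) :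
    PrevalentIn {x ∈ X | IsLinearlyStableCycle F (omegaSet F x)} X := by
  have hrefl : ∀ x : E, coneLE K x x := fun x => by
    simpa only [coneLE, sub_self] using hK.zero_mem
  exact theoremA_general K F X hK hKint hXopen
    (fun x hx => ((hωc x hx x hx (hrefl x)).1 x ⟨hrefl x, hrefl x⟩).1) hH3
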